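/- arXiv:1909.04441 — 5 statements merged into one kernel-verified Lean document; each statement's English description precedes it below -/
import Mathlib

section
/- In the polynomial ring ℤ[u, y, X], define the twisted factorial powers X^{(n)} := ∏_{i=0}^{n−1} (X + (i)_u·y). Then for all m, n ∈ ℕ one has the product formula X^{(n)}·X^{(m)} = Σ_{i=0}^{min(m,n)} (−1)^i · u^{i(i−1)/2} · C(m,i)_u · (∏_{j=n−i+1}^{n} (j)_u) · y^i · X^{(m+n−i)}. -/
/-!
The formula is proved by induction on `m`. Since `(m + k)_u = (m)_u + u^m (k)_u`,
`X^{(m+n-i)} * (X + (m)_u y) = X^{(m+n-i+1)} - u^m (n-i)_u y X^{(m+n-i)}`,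
so multiplying by the next factor of `X^{(m+1)}` changes the coefficients by
`a(m+1, i+1) = a(m, i+1) - u^m (n-i)_u y a(m, i)` (`twCoeff_succ_succ`). This recurrence amounts to
the second Pascal identity for Gaussian binomials (`gbinom_pascal`).

The product `∏_{j=n-i+1}^{n} (j)_u` is replaced by `∏_{j<i} (n-j)_u`, which agrees with it for
`i ≤ n` and vanishes for `i > n` because of the factor `(0)_u`; hence the sum may be taken over all
`i ≤ m`.
-/

/-- The `q`-integer `(n)_q = 1 + q + ⋯ + q^{n-1}`. -/
def qInt {S : Type*} [CommRing S] (q : S) (n : ℕ) : S :=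
  ∑ i ∈ Finset.range n, q ^ i

/-- The Gaussian binomial coefficient `C(n,k)_u ∈ ℤ[u]`. -/
noncomputable def gbinom : ℕ → ℕ → Polynomial ℤ
  | _, 0 => 1
  | 0, _ + 1 => 0
  | n + 1, k + 1 => Polynomial.X ^ (k + 1) * gbinom n (k + 1) + gbinom n k
  termination_by n _ => n

/- We work in `ℤ[u, y, X] = MvPolynomial (Fin 3) ℤ`, with `u` the variable `0`,
`y` the variable `1` and `X` the variable `2`. -/

/-- The variable `u`. -/
noncomputable def u : MvPolynomial (Fin 3) ℤ := MvPolynomial.X 0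
/-- The variable `y`. -/
noncomputable def y : MvPolynomial (Fin 3) ℤ := MvPolynomial.X 1
/-- The variable `X`. -/
noncomputable def Xv : MvPolynomial (Fin 3) ℤ := MvPolynomial.X 2

/-- The twisted factorial power `X^{(n)} = ∏_{i=0}^{n-1} (X + (i)_u·y)`. -/
noncomputable def twPow (n : ℕ) : MvPolynomial (Fin 3) ℤ :=
  ∏ i ∈ Finset.range n, (Xv + qInt u i * y)

theorem gbinom_zero_right (n : ℕ) : gbinom n 0 = 1 := by
  cases n <;> simp [gbinom]

theorem gbinom_zero_succ (k : ℕ) : gbinom 0 (k + 1) = 0 := by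
  simp [gbinom]

theorem gbinom_succ_succ (n k : ℕ) :
    gbinom (n + 1) (k + 1) = Polynomial.X ^ (k + 1) * gbinom n (k + 1) + gbinom n k := by
  rw [gbinom]

theorem gbinom_eq_zero_of_lt {n k : ℕ} (h : n < k) : gbinom n k = 0 := by
  induction n generalizing k with
  | zero =>
    obtain ⟨k, rfl⟩ := Nat.exists_eq_succ_of_ne_zero (by omega : k ≠ 0)
    exact gbinom_zero_succ k
  | succ n ih =>
    obtain ⟨k, rfl⟩ := Nat.exists_eq_succ_of_ne_zero (by omega : k ≠ 0)
    rw [Nat.succ_eq_add_one, gbinom_succ_succ, ih (by omega), ih (by omega)]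
    simp

/-- The second Pascal identity `C(m+1,k+1) = C(m,k+1) + u^{m-k} C(m,k)`, multiplied by `u^k` so that
it holds for all `m` and `k` without subtraction in the exponent. -/
theorem gbinom_pascal (m k : ℕ) :
    Polynomial.X ^ k * gbinom (m + 1) (k + 1) =
      Polynomial.X ^ k * gbinom m (k + 1) + Polynomial.X ^ m * gbinom m k := by
  induction m generalizing k with
  | zero =>
    cases k with
    | zero => simp [gbinom_succ_succ, gbinom_zero_succ, gbinom_zero_right]
    | succ k => simp [gbinom_succ_succ, gbinom_zero_succ]
  | succ m ih =>
    cases k with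
    | zero =>
      have h := ih 0
      have h₁ := gbinom_succ_succ (m + 1) 0
      have h₂ := gbinom_succ_succ m 0
      simp only [gbinom_zero_right, pow_zero, one_mul, zero_add, pow_one, mul_one] at h h₁ h₂ ⊢
      linear_combination h₁ - h₂ + Polynomial.X * h
    | succ k =>
      have h := ih (k + 1)
      have h' := ih k
      have h₁ := gbinom_succ_succ (m + 1) (k + 1)
      have h₂ := gbinom_succ_succ m (k + 1)
      have h₃ := gbinom_succ_succ m k
      linear_combination Polynomial.X ^ (k + 1) * h₁ - Polynomial.X ^ (k + 1) * h₂
        - Polynomial.X ^ (m + 1) * h₃ + Polynomial.X ^ (k + 2) * h + Polynomial.X * h'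

theorem qInt_add {S : Type*} [CommRing S] (q : S) (m k : ℕ) :
    qInt q (m + k) = qInt q m + q ^ m * qInt q k := by
  simp [qInt, Finset.sum_range_add, Finset.mul_sum, pow_add]

/-- The descending product `(n)_u (n-1)_u ⋯ (n-i+1)_u`. For `i > n` the truncated subtraction
produces a factor `(0)_u = 0`. -/
noncomputable def qDesc (n i : ℕ) : MvPolynomial (Fin 3) ℤ :=
  ∏ j ∈ Finset.range i, qInt u (n - j)

theorem qDesc_eq_zero {n i : ℕ} (h : n < i) : qDesc n i = 0 :=
  Finset.prod_eq_zero (Finset.mem_range.mpr h) (by simp [qInt])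

theorem qDesc_eq_prod_Ico {n i : ℕ} (h : i ≤ n) :
    qDesc n i = ∏ j ∈ Finset.Ico (n - i + 1) (n + 1), qInt u j := by
  induction i with
  | zero => simp [qDesc]
  | succ i ih =>
    rw [Finset.prod_eq_prod_Ico_succ_bot (by omega), show n - (i + 1) + 1 = n - i by omega,
      ← ih (by omega), qDesc, Finset.prod_range_succ, ← qDesc, mul_comm]

/-- The coefficient of `X^{(m+n-i)}` in `X^{(n)} X^{(m)}`. -/
noncomputable def twCoeff (m n i : ℕ) : MvPolynomial (Fin 3) ℤ :=
  (-1) ^ i * u ^ (i.choose 2) * Polynomial.aeval u (gbinom m i) * qDesc n i * y ^ i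

theorem twCoeff_zero (m n : ℕ) : twCoeff m n 0 = 1 := by
  simp [twCoeff, gbinom_zero_right, qDesc]

theorem twCoeff_succ_succ (m n i : ℕ) :
    twCoeff (m + 1) n (i + 1) =
      twCoeff m n (i + 1) - u ^ m * qInt u (n - i) * y * twCoeff m n i := by
  have h := congrArg (Polynomial.aeval u) (gbinom_pascal m i)
  simp only [map_add, map_mul, map_pow, Polynomial.aeval_X] at h
  have hd : qDesc n (i + 1) = qDesc n i * qInt u (n - i) := Finset.prod_range_succ _ _
  have hc : (i + 1).choose 2 = i + i.choose 2 := by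
    rw [Nat.choose_succ_succ' i 1, Nat.choose_one_right]
  simp only [twCoeff, hd, hc]
  linear_combination (-1) ^ (i + 1) * u ^ (i.choose 2) * qDesc n i * qInt u (n - i) *
    y ^ (i + 1) * h

theorem twPow_succ (n : ℕ) : twPow (n + 1) = twPow n * (Xv + qInt u n * y) :=
  Finset.prod_range_succ _ _

/-- Multiplying one term of the expansion by the next factor of `X^{(m+1)}`. For `i > n` both sides
vanish with the coefficient. -/
theorem twCoeff_mul_twPow_mul (m n i : ℕ) :
    twCoeff m n i * twPow (m + n - i) * (Xv + qInt u m * y) =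
      twCoeff m n i * twPow (m + 1 + n - i) -
        u ^ m * qInt u (n - i) * y * twCoeff m n i * twPow (m + n - i) := by
  rcases lt_or_ge n i with h | h
  · simp [twCoeff, qDesc_eq_zero h]
  · have hq := qInt_add u m (n - i)
    rw [← Nat.add_sub_assoc h] at hq
    rw [show m + 1 + n - i = m + n - i + 1 by omega, twPow_succ]
    linear_combination -(twCoeff m n i * twPow (m + n - i) * y) * hq

/-- The product formula with the sum taken over all `i ≤ m`. -/
theorem twPow_mul_twPow (m n : ℕ) :
    twPow n * twPow m = ∑ i ∈ Finset.range (m + 1), twCoeff m n i * twPow (m + n - i) := by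
  induction m with
  | zero => simp [twCoeff_zero, twPow]
  | succ m ih =>
    have hlast : twCoeff m n (m + 1) = 0 := by
      simp [twCoeff, gbinom_eq_zero_of_lt (Nat.lt_succ_self m)]
    have hidx : ∀ i, m + 1 + n - (i + 1) = m + n - i := fun i => by omega
    -- Add the vanishing term `i = m + 1`, then split off the term `i = 0`.
    have hext : ∑ i ∈ Finset.range (m + 1), twCoeff m n i * twPow (m + 1 + n - i) =
        ∑ i ∈ Finset.range (m + 1), twCoeff m n (i + 1) * twPow (m + n - i) +
          twPow (m + 1 + n) := by
      have h := Finset.sum_range_succ (fun i => twCoeff m n i * twPow (m + 1 + n - i)) (m + 1)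
      rw [Finset.sum_range_succ'] at h
      simp only [hlast, hidx, twCoeff_zero, zero_mul, add_zero, one_mul, Nat.sub_zero] at h
      exact h.symm
    rw [twPow_succ, ← mul_assoc, ih, Finset.sum_mul,
      Finset.sum_congr rfl fun i _ => twCoeff_mul_twPow_mul m n i,
      Finset.sum_sub_distrib, hext, Finset.sum_range_succ' _ (m + 1)]
    simp only [hidx, twCoeff_succ_succ, sub_mul, Finset.sum_sub_distrib, twCoeff_zero, one_mul,
      Nat.sub_zero]
    ring

/-- the product formula
`X^{(n)}·X^{(m)} = Σ_{i=0}^{min(m,n)} (−1)^i·u^{i(i−1)/2}·C(m,i)_u·(∏_{j=n−i+1}^{n} (j)_u)·y^i·X^{(m+n−i)}`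
in `ℤ[u, y, X]`. -/
theorem twisted_power_product_formula :
    ∀ m n : ℕ,
      twPow n * twPow m =
        ∑ i ∈ Finset.range (min m n + 1),
          (-1 : MvPolynomial (Fin 3) ℤ) ^ i * u ^ (i * (i - 1) / 2) *
            Polynomial.aeval u (gbinom m i) *
            (∏ j ∈ Finset.Ico (n - i + 1) (n + 1), qInt u j) *
            y ^ i * twPow (m + n - i) := by
  intro m n
  rw [twPow_mul_twPow]
  -- The terms with `n < i ≤ m` vanish.
  have hsub : Finset.range (min m n + 1) ⊆ Finset.range (m + 1) :=
    Finset.range_subset_range.mpr (by omega)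
  rw [← Finset.sum_subset hsub]
  · refine Finset.sum_congr rfl fun i hi => ?_
    have hin : i ≤ n := by
      have := Finset.mem_range.mp hi
      omega
    rw [twCoeff, qDesc_eq_prod_Ico hin, Nat.choose_two_right]
  · intro i hi hi'
    rw [Finset.mem_range] at hi hi'
    simp [twCoeff, qDesc_eq_zero (show n < i by omega)]
end

section
/- Let A be a commutative ring and q, y ∈ A. On the free A-module P with basis (ξ^{[n]})_{n∈ℕ}, the A-bilinear multiplication determined on basis elements by ξ^{[n]}·ξ^{[m]} = Σ_{i=0}^{min(m,n)} (−1)^i · q^{i(i−1)/2} · C(m+n−i, m)_q · C(m,i)_q · y^i · ξ^{[m+n−i]} is associative and commutative with unit element ξ^{[0]}, so that P becomes a commutative unital A-algebra; moreover, for every n ∈ ℕ, the A-submodule spanned by {ξ^{[k]} : k > n} is an ideal of this algebra. -/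
/-- `C(n,k)_q`: the image of the Gaussian binomial coefficient under `u ↦ q`. -/
noncomputable def gbinomAt {S : Type*} [CommRing S] (q : S) (n k : ℕ) : S :=
  Polynomial.aeval q (gbinom n k)

/-- The product of the basis elements `ξ^{[n]}·ξ^{[m]}`, as an element of the free
`A`-module `ℕ →₀ A` (in which `Finsupp.single k 1` represents `ξ^{[k]}`):
`ξ^{[n]}·ξ^{[m]} = Σ_{i=0}^{min(m,n)} (−1)^i·q^{i(i−1)/2}·C(m+n−i,m)_q·C(m,i)_q·y^i·ξ^{[m+n−i]}`. -/
noncomputable def xiMul {A : Type*} [CommRing A] (q y : A) (n m : ℕ) : ℕ →₀ A :=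
  ∑ i ∈ Finset.range (min n m + 1),
    Finsupp.single (m + n - i)
      ((-1 : A) ^ i * q ^ (i * (i - 1) / 2) * gbinomAt q (m + n - i) m * gbinomAt q m i * y ^ i)

/-- The `A`-bilinear multiplication on the free `A`-module `ℕ →₀ A` determined on basis
elements by `xiMul`. -/
noncomputable def dpMul {A : Type*} [CommRing A] (q y : A) (f g : ℕ →₀ A) : ℕ →₀ A :=
  f.sum fun n a => g.sum fun m b => (a * b) • xiMul q y n m

/-! ### Gaussian binomial coefficients -/

section Gauss

variable {S : Type*} [CommRing S] (q : S)

theorem gbinomAt_zero_right (n : ℕ) : gbinomAt q n 0 = 1 := by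
  cases n <;> simp [gbinomAt, gbinom]

theorem gbinomAt_succ_succ (n k : ℕ) :
    gbinomAt q (n + 1) (k + 1) = q ^ (k + 1) * gbinomAt q n (k + 1) + gbinomAt q n k := by
  simp [gbinomAt, gbinom]

theorem gbinomAt_zero_succ (k : ℕ) : gbinomAt q 0 (k + 1) = 0 := by
  simp [gbinomAt, gbinom]

theorem gbinomAt_eq_zero {n k : ℕ} (h : n < k) : gbinomAt q n k = 0 := by
  induction n generalizing k with
  | zero =>
    obtain ⟨k, rfl⟩ : ∃ j, k = j + 1 := ⟨k - 1, by omega⟩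
    exact gbinomAt_zero_succ q k
  | succ n ih =>
    obtain ⟨k, rfl⟩ : ∃ j, k = j + 1 := ⟨k - 1, by omega⟩
    rw [gbinomAt_succ_succ, ih (by omega), ih (by omega)]
    ring

theorem gbinomAt_self (n : ℕ) : gbinomAt q n n = 1 := by
  induction n with
  | zero => exact gbinomAt_zero_right q 0
  | succ n ih => rw [gbinomAt_succ_succ, ih, gbinomAt_eq_zero q (Nat.lt_succ_self n)]; ring

theorem qInt_add_s2 (a b : ℕ) : qInt q (a + b) = qInt q a + q ^ a * qInt q b := by
  simp [qInt, Finset.sum_range_add, Finset.mul_sum, pow_add]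

theorem qInt_zero : qInt q 0 = 0 := by simp [qInt]

theorem qInt_one : qInt q 1 = 1 := by simp [qInt]

theorem gbinomAt_one_right (n : ℕ) : gbinomAt q n 1 = qInt q n := by
  induction n with
  | zero => rw [gbinomAt_zero_succ, qInt_zero]
  | succ n ih =>
    rw [gbinomAt_succ_succ, ih, gbinomAt_zero_right, add_comm n 1, qInt_add_s2, qInt_one]
    ring

/-- The second `q`-Pascal rule, `C(n+1,k+1) = C(n,k+1) + q^{n-k} C(n,k)`, with `d = n - k`. -/
theorem gbinomAt_succ_succ' (k d : ℕ) :
    gbinomAt q (k + d + 1) (k + 1) = gbinomAt q (k + d) (k + 1) + q ^ d * gbinomAt q (k + d) k := by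
  obtain ⟨n, hn⟩ : ∃ n, n = k + d := ⟨_, rfl⟩
  rw [← hn]
  induction n generalizing k d with
  | zero =>
    obtain ⟨rfl, rfl⟩ : k = 0 ∧ d = 0 := by omega
    simp [gbinomAt_self, gbinomAt_zero_succ]
  | succ n ih =>
    rcases d with _ | d
    · obtain rfl : k = n + 1 := by omega
      rw [gbinomAt_self, gbinomAt_self, gbinomAt_eq_zero q (Nat.lt_succ_self _)]
      ring
    · rcases k with _ | k
      · simp only [zero_add, gbinomAt_one_right, gbinomAt_zero_right]
        obtain rfl : n = d := by omega
        rw [qInt_add_s2 q (n + 1) 1, qInt_one]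
      · have h1 := ih (k + 1) d (by omega)
        have h2 := ih k (d + 1) (by omega)
        have h3 := gbinomAt_succ_succ q n (k + 1)
        have h4 := gbinomAt_succ_succ q n k
        rw [gbinomAt_succ_succ q (n + 1) (k + 1)]
        linear_combination q ^ (k + 2) * h1 + h2 - h3 - q ^ (d + 1) * h4

theorem sub_one_mul_qInt (n : ℕ) : (q - 1) * qInt q n = q ^ n - 1 := by
  rw [qInt, mul_comm]; exact geom_sum_mul q n

end Gauss

/-! ### Absorption identities over a domain -/

section Domain

variable {R : Type*} [CommRing R] [IsDomain R] {q : R}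

/-- `(k+1)_q C(n,k+1)_q = (n-k)_q C(n,k)_q`, with `d = n - k`: the difference of the two `q`-Pascal
rules is this identity multiplied by `q - 1`. -/
theorem qInt_mul_gbinomAt_succ (hq : q ≠ 1) (k d : ℕ) :
    qInt q (k + 1) * gbinomAt q (k + d) (k + 1) = qInt q d * gbinomAt q (k + d) k := by
  apply mul_left_cancel₀ (sub_ne_zero.mpr hq)
  have h1 := gbinomAt_succ_succ q (k + d) k
  have h2 := gbinomAt_succ_succ' q k d
  rw [← mul_assoc, ← mul_assoc, sub_one_mul_qInt, sub_one_mul_qInt]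
  linear_combination h2 - h1

/-- `(k+1)_q C(n+1,k+1)_q = (n+1)_q C(n,k)_q`, with `d = n - k`. -/
theorem qInt_mul_gbinomAt_succ_succ (hq : q ≠ 1) (k d : ℕ) :
    qInt q (k + 1) * gbinomAt q (k + d + 1) (k + 1) = qInt q (k + d + 1) * gbinomAt q (k + d) k := by
  have h := qInt_mul_gbinomAt_succ hq k d
  have e : qInt q (k + d + 1) = qInt q (k + 1) + q ^ (k + 1) * qInt q d := by
    rw [← qInt_add_s2]; congr 1; omega
  rw [gbinomAt_succ_succ, e]
  linear_combination q ^ (k + 1) * h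

/-- `(n+1-k)_q C(n+1,k)_q = (n+1)_q C(n,k)_q`, with `d = n - k`. -/
theorem qInt_mul_gbinomAt_add_succ (hq : q ≠ 1) (k d : ℕ) :
    qInt q (d + 1) * gbinomAt q (k + d + 1) k = qInt q (k + d + 1) * gbinomAt q (k + d) k := by
  rw [← qInt_mul_gbinomAt_succ_succ hq k d]
  exact (qInt_mul_gbinomAt_succ hq k (d + 1)).symm

end Domain

/-! ### The realisation by functions on `ℕ` -/

/-- The coefficient of `ξ^{[m+n-i]}` in `ξ^{[n]}·ξ^{[m]}`. -/
noncomputable def xiCoeff {A : Type*} [CommRing A] (q y : A) (n m i : ℕ) : A :=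
  (-1 : A) ^ i * q ^ (i * (i - 1) / 2) * gbinomAt q (m + n - i) m * gbinomAt q m i * y ^ i

/-- The value of `ξ^{[n]}` at the point `ξ = -(k)_q y`, namely
`(-y)^n q^{n(n-1)/2} C(k,n)_q`. -/
noncomputable def xiVal {A : Type*} [CommRing A] (q y : A) (n k : ℕ) : A :=
  (-y) ^ n * q ^ (n * (n - 1) / 2) * gbinomAt q k n

theorem xiMul_eq_sum_range_right {A : Type*} [CommRing A] (q y : A) (n m : ℕ) :
    xiMul q y n m =
      ∑ i ∈ Finset.range (m + 1), Finsupp.single (m + n - i) (xiCoeff q y n m i) := by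
  rw [xiMul]
  refine Finset.sum_subset (Finset.range_mono (by omega)) fun i hi hmin => ?_
  simp only [Finset.mem_range] at hi hmin
  -- here `n < i ≤ m`, so `C(m+n-i,m)` vanishes
  rw [gbinomAt_eq_zero q (show m + n - i < m by omega)]
  simp

section Values

variable {R : Type*} [CommRing R] [IsDomain R] {q : R} (y : R)

/-- `e_n (e_1 + (n)_q y) = (n+1)_q e_{n+1}`, where `e_1(k) = -(k)_q y`. -/
theorem xiVal_mul_add (hq : q ≠ 1) (n k : ℕ) :
    xiVal q y n k * (xiVal q y 1 k + qInt q n * y) = qInt q (n + 1) * xiVal q y (n + 1) k := by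
  simp only [xiVal, gbinomAt_one_right, Nat.triangle_succ]
  rcases lt_or_ge k n with h | h
  · rw [gbinomAt_eq_zero q h, gbinomAt_eq_zero q (show k < n + 1 by omega)]
    ring
  · obtain ⟨d, rfl⟩ := Nat.exists_eq_add_of_le h
    have h1 := qInt_mul_gbinomAt_succ hq n d
    rw [qInt_add_s2 q n d]
    simp only [pow_add, pow_succ, pow_zero]
    linear_combination (-(-y) ^ n * (-y) * q ^ (n * (n - 1) / 2) * q ^ n) * h1

theorem xiCoeff_zero_succ (hq : q ≠ 1) (n m : ℕ) :
    qInt q (m + 1) * xiCoeff q y n (m + 1) 0 = xiCoeff q y n m 0 * qInt q (m + n + 1) := by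
  have h := qInt_mul_gbinomAt_succ_succ hq m n
  simp only [xiCoeff, gbinomAt_zero_right, Nat.sub_zero, show m + 1 + n = m + n + 1 by omega]
  linear_combination h

/-- The recurrence in `m` satisfied by the structure constants, which comes down to the second
`q`-Pascal rule for `C(m+1,i+1)_q`. -/
theorem xiCoeff_succ_succ (hq : q ≠ 1) (n m i : ℕ) (hi : i ≤ m) :
    qInt q (m + 1) * xiCoeff q y n (m + 1) (i + 1) =
      xiCoeff q y n m (i + 1) * qInt q (m + n - (i + 1) + 1) +
      xiCoeff q y n m i * ((qInt q m - qInt q (m + n - i)) * y) := by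
  rcases lt_or_ge i n with h | h
  · obtain ⟨d, rfl⟩ : ∃ d, n = i + 1 + d := ⟨n - (i + 1), by omega⟩
    obtain ⟨e, rfl⟩ := Nat.exists_eq_add_of_le hi
    have h1 := qInt_mul_gbinomAt_succ_succ hq (i + e) d
    have h2 := qInt_mul_gbinomAt_add_succ hq (i + e) d
    have h3 := gbinomAt_succ_succ' q i e
    have e1 : i + e + 1 + (i + 1 + d) - (i + 1) = i + e + d + 1 := by omega
    have e2 : i + e + (i + 1 + d) - (i + 1) = i + e + d := by omega
    have e3 : i + e + (i + 1 + d) - i = i + e + d + 1 := by omega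
    have h4 : qInt q (i + e + d + 1) = qInt q (i + e) + q ^ (i + e) * qInt q (d + 1) := by
      rw [← qInt_add_s2]; rfl
    simp only [xiCoeff, e1, e2, e3, Nat.triangle_succ]
    rw [h3]
    have h4' : qInt q (i + e) - qInt q (i + e + d + 1) = - (q ^ (i + e) * qInt q (d + 1)) := by
      rw [h4]; ring
    rw [h4']
    simp only [pow_add, pow_one]
    linear_combination
      ((-1) ^ i * (-1) * (q ^ (i * (i - 1) / 2) * q ^ i) * y ^ i * y) *
        ((gbinomAt q (i + e) (i + 1) + q ^ e * gbinomAt q (i + e) i) * h1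
          - q ^ e * gbinomAt q (i + e) i * h2)
  · -- for `i ≥ n` all three terms vanish
    have z1 : xiCoeff q y n (m + 1) (i + 1) = 0 := by
      rw [xiCoeff, gbinomAt_eq_zero q (show m + 1 + n - (i + 1) < m + 1 by omega)]; ring
    have z2 : xiCoeff q y n m (i + 1) = 0 := by
      rcases hi.eq_or_lt with rfl | hlt
      · rw [xiCoeff, gbinomAt_eq_zero q (Nat.lt_succ_self i)]; ring
      · rw [xiCoeff, gbinomAt_eq_zero q (show m + n - (i + 1) < m by omega)]; ring
    have z3 : xiCoeff q y n m i * ((qInt q m - qInt q (m + n - i)) * y) = 0 := by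
      rcases h.eq_or_lt with rfl | hlt
      · simp
      · rw [xiCoeff, gbinomAt_eq_zero q (show m + n - i < m by omega)]; ring
    rw [z1, z2, z3]; ring

/-- The product formula `e_n e_m = ∑_i c_i e_{m+n-i}`. -/
theorem xiVal_mul (hq : q ≠ 1) (hInt : ∀ m, qInt q (m + 1) ≠ 0) (n m k : ℕ) :
    xiVal q y n k * xiVal q y m k =
      ∑ i ∈ Finset.range (m + 1), xiCoeff q y n m i * xiVal q y (m + n - i) k := by
  induction m with
  | zero => simp [xiCoeff, xiVal, gbinomAt_zero_right]
  | succ m ih =>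
    apply mul_left_cancel₀ (hInt m)
    have hstep : qInt q (m + 1) * (xiVal q y n k * xiVal q y (m + 1) k) =
        ∑ i ∈ Finset.range (m + 1), xiCoeff q y n m i * qInt q (m + n - i + 1) *
          xiVal q y (m + n - i + 1) k +
        ∑ i ∈ Finset.range (m + 1), xiCoeff q y n m i * ((qInt q m - qInt q (m + n - i)) * y) *
          xiVal q y (m + n - i) k := by
      calc _ = (xiVal q y n k * xiVal q y m k) * (xiVal q y 1 k + qInt q m * y) := by
            linear_combination (-xiVal q y n k) * xiVal_mul_add y hq m k
        _ = _ := by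
            rw [ih, Finset.sum_mul, ← Finset.sum_add_distrib]
            refine Finset.sum_congr rfl fun i _ => ?_
            linear_combination xiCoeff q y n m i * xiVal_mul_add y hq (m + n - i) k
    -- the first sum may be extended to `i = m + 1`, because `C(m,m+1) = 0`
    have hext : ∑ i ∈ Finset.range (m + 1), xiCoeff q y n m i * qInt q (m + n - i + 1) *
          xiVal q y (m + n - i + 1) k =
        ∑ i ∈ Finset.range (m + 2), xiCoeff q y n m i * qInt q (m + n - i + 1) *
          xiVal q y (m + 1 + n - i) k := by
      rw [Finset.sum_range_succ _ (m + 1)]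
      have z : xiCoeff q y n m (m + 1) = 0 := by
        rw [xiCoeff, gbinomAt_eq_zero q (Nat.lt_succ_self m)]; ring
      rw [z, zero_mul, zero_mul, add_zero]
      refine Finset.sum_congr rfl fun i hi => ?_
      rw [Finset.mem_range] at hi
      rw [show m + n - i + 1 = m + 1 + n - i by omega]
    rw [hstep, hext, Finset.sum_range_succ', Finset.sum_range_succ' _ (m + 1), mul_add,
      add_right_comm, ← Finset.sum_add_distrib, Finset.mul_sum]
    congr 1
    · refine Finset.sum_congr rfl fun i hi => ?_
      rw [Finset.mem_range] at hi
      have h := xiCoeff_succ_succ y hq n m i (by omega)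
      rw [show m + 1 + n - (i + 1) = m + n - i by omega]
      linear_combination (-xiVal q y (m + n - i) k) * h
    · have h := xiCoeff_zero_succ y hq n m
      simp only [Nat.sub_zero]
      linear_combination (-xiVal q y (m + 1 + n) k) * h

end Values

/-! ### Bilinearity, base change and the unit -/

section Bilinear

variable {A : Type*} [CommRing A] (q y : A)

theorem dpMul_single_single (n m : ℕ) (a b : A) :
    dpMul q y (Finsupp.single n a) (Finsupp.single m b) = (a * b) • xiMul q y n m := by
  simp [dpMul]

theorem dpMul_add_left (f g h : ℕ →₀ A) :
    dpMul q y (f + g) h = dpMul q y f h + dpMul q y g h := by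
  unfold dpMul
  rw [Finsupp.sum_add_index']
  · simp
  · intro n a b
    rw [← Finsupp.sum_add]
    simp only [add_mul, add_smul]

theorem dpMul_add_right (f g h : ℕ →₀ A) :
    dpMul q y f (g + h) = dpMul q y f g + dpMul q y f h := by
  unfold dpMul
  rw [← Finsupp.sum_add]
  refine Finsupp.sum_congr fun n _ => ?_
  rw [Finsupp.sum_add_index']
  · simp
  · simp only [mul_add, add_smul, implies_true]

theorem dpMul_smul_left (a : A) (f g : ℕ →₀ A) :
    dpMul q y (a • f) g = a • dpMul q y f g := by
  unfold dpMul
  rw [Finsupp.sum_smul_index' (by simp), Finsupp.smul_sum]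
  simp only [Finsupp.smul_sum, smul_smul, smul_eq_mul, mul_assoc]

theorem dpMul_smul_right (a : A) (f g : ℕ →₀ A) :
    dpMul q y f (a • g) = a • dpMul q y f g := by
  unfold dpMul
  rw [Finsupp.smul_sum]
  refine Finsupp.sum_congr fun n _ => ?_
  rw [Finsupp.sum_smul_index' (by simp), Finsupp.smul_sum]
  simp only [smul_smul, smul_eq_mul, mul_left_comm]

theorem dpMul_zero_left (f : ℕ →₀ A) : dpMul q y 0 f = 0 := by simp [dpMul]

theorem dpMul_zero_right (f : ℕ →₀ A) : dpMul q y f 0 = 0 := by simp [dpMul]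

theorem xiMul_zero_left (n : ℕ) : xiMul q y 0 n = Finsupp.single n 1 := by
  simp [xiMul, gbinomAt_self, gbinomAt_zero_right, -Finsupp.single_mul]

theorem xiMul_zero_right (n : ℕ) : xiMul q y n 0 = Finsupp.single n 1 := by
  simp [xiMul, gbinomAt_zero_right, -Finsupp.single_mul]

theorem map_gbinomAt {B : Type*} [CommRing B] (φ : A →+* B) (n k : ℕ) :
    φ (gbinomAt q n k) = gbinomAt (φ q) n k := by
  simp only [gbinomAt, Polynomial.aeval_def, Polynomial.hom_eval₂]
  congr 1
  exact RingHom.ext_int _ _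

theorem xiMul_mapRange {B : Type*} [CommRing B] (φ : A →+* B) (n m : ℕ) :
    Finsupp.mapRange.addMonoidHom φ.toAddMonoidHom (xiMul q y n m) = xiMul (φ q) (φ y) n m := by
  simp [xiMul, map_sum, map_gbinomAt, -Finsupp.single_mul]

/-- The multiplication commutes with base change along a ring homomorphism. -/
theorem dpMul_mapRange {B : Type*} [CommRing B] (φ : A →+* B) (f g : ℕ →₀ A) :
    Finsupp.mapRange.addMonoidHom φ.toAddMonoidHom (dpMul q y f g) =
      dpMul (φ q) (φ y) (Finsupp.mapRange.addMonoidHom φ.toAddMonoidHom f)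
        (Finsupp.mapRange.addMonoidHom φ.toAddMonoidHom g) := by
  induction f using Finsupp.induction_linear with
  | zero => simp only [dpMul_zero_left, map_zero]
  | add f f' hf hf' => simp only [dpMul_add_left, map_add, hf, hf']
  | single n a =>
    induction g using Finsupp.induction_linear with
    | zero => simp only [dpMul_zero_right, map_zero]
    | add g g' hg hg' => simp only [dpMul_add_right, map_add, hg, hg']
    | single m b =>
      have hs : ∀ (c : A) (x : ℕ →₀ A),
          Finsupp.mapRange.addMonoidHom φ.toAddMonoidHom (c • x) =
            φ c • Finsupp.mapRange.addMonoidHom φ.toAddMonoidHom x := by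
        intro c x; ext j; simp
      rw [dpMul_single_single, hs, xiMul_mapRange]
      simp [dpMul_single_single]

end Bilinear

/-! ### Injectivity of the realisation and the algebra laws -/

section Realisation

variable {R : Type*} [CommRing R] [IsDomain R] {q y : R}

/-- The map `ξ^{[n]} ↦ e_n` carries the multiplication to the pointwise product of functions. -/
theorem linearCombination_dpMul (hq : q ≠ 1) (hInt : ∀ m, qInt q (m + 1) ≠ 0) (f g : ℕ →₀ R) :
    Finsupp.linearCombination R (xiVal q y) (dpMul q y f g) =
      Finsupp.linearCombination R (xiVal q y) f * Finsupp.linearCombination R (xiVal q y) g := by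
  induction f using Finsupp.induction_linear with
  | zero => simp only [dpMul_zero_left, map_zero, zero_mul]
  | add f f' hf hf' => simp only [dpMul_add_left, map_add, hf, hf', add_mul]
  | single n a =>
    induction g using Finsupp.induction_linear with
    | zero => simp only [dpMul_zero_right, map_zero, mul_zero]
    | add g g' hg hg' => simp only [dpMul_add_right, map_add, hg, hg', mul_add]
    | single m b =>
      have h : Finsupp.linearCombination R (xiVal q y) (xiMul q y n m) =
          xiVal q y n * xiVal q y m := by
        ext k
        rw [xiMul_eq_sum_range_right, Pi.mul_apply, xiVal_mul y hq hInt, map_sum,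
          Finset.sum_apply]
        simp
      rw [dpMul_single_single, map_smul, h]
      rw [Finsupp.linearCombination_single, Finsupp.linearCombination_single, smul_mul_smul_comm]

theorem linearCombination_xiVal_injective (hq : q ≠ 0) (hy : y ≠ 0) :
    Function.Injective (Finsupp.linearCombination R (xiVal q y)) := by
  rw [injective_iff_map_eq_zero]
  intro f hf
  ext n
  induction n using Nat.strong_induction_on with
  | _ n ih =>
    -- at `n` only the term of index `n` survives: `f j = 0` for `j < n`, `e_j(n) = 0` for `j > n`
    have h := congrFun hf n
    rw [Finsupp.linearCombination_apply, Finsupp.sum, Finset.sum_apply,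
      Finset.sum_eq_single n] at h
    · simpa [xiVal, gbinomAt_self, hq, hy] using h
    · intro j _ hj
      rcases lt_or_gt_of_ne hj with hlt | hgt
      · simp [ih j hlt]
      · simp [xiVal, gbinomAt_eq_zero q hgt]
    · intro hn
      simp [Finsupp.notMem_support_iff.mp hn]

end Realisation

section Laws

open Polynomial

theorem qInt_C_X_ne_zero (m : ℕ) : qInt (C X : ℤ[X][X]) (m + 1) ≠ 0 := by
  intro h
  -- specialising `u` to `1` turns `(m+1)_u` into the integer `m + 1`
  have h' := congrArg (fun p : ℤ[X][X] => (p.eval 0).eval 1) h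
  simp [qInt, eval_finsetSum] at h'
  omega

variable {A : Type*} [CommRing A] (q y : A)

/-- The specialisation `ℤ[u][Y] → A`, `u ↦ q`, `Y ↦ y`. -/
noncomputable def specialise : ℤ[X][X] →+* A :=
  eval₂RingHom (aeval q : ℤ[X] →ₐ[ℤ] A).toRingHom y

theorem specialise_u : specialise q y (C X) = q := by simp [specialise]

theorem specialise_Y : specialise q y X = y := by simp [specialise]

theorem C_X_ne_one : (C X : ℤ[X][X]) ≠ 1 := by
  intro h
  have h' := congrArg (fun p : ℤ[X][X] => (p.eval 0).eval 0) h
  simp at h'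

theorem dpMul_universal_injective :
    Function.Injective (Finsupp.linearCombination ℤ[X][X] (xiVal (C X : ℤ[X][X]) X)) :=
  linearCombination_xiVal_injective (by simp) X_ne_zero

theorem dpMul_comm (f g : ℕ →₀ A) : dpMul q y f g = dpMul q y g f := by
  induction f using Finsupp.induction_linear with
  | zero => simp only [dpMul_zero_left, dpMul_zero_right]
  | add f f' hf hf' => simp only [dpMul_add_left, dpMul_add_right, hf, hf']
  | single n a =>
    induction g using Finsupp.induction_linear with
    | zero => simp only [dpMul_zero_left, dpMul_zero_right]
    | add g g' hg hg' => simp only [dpMul_add_left, dpMul_add_right, hg, hg']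
    | single m b =>
      have h : dpMul (C X : ℤ[X][X]) X (Finsupp.single n 1) (Finsupp.single m 1) =
          dpMul (C X : ℤ[X][X]) X (Finsupp.single m 1) (Finsupp.single n 1) := by
        apply dpMul_universal_injective
        simp only [linearCombination_dpMul C_X_ne_one qInt_C_X_ne_zero]
        exact mul_comm _ _
      have h' := congrArg
        (Finsupp.mapRange.addMonoidHom (specialise q y).toAddMonoidHom) h
      simp only [dpMul_single_single, mul_one, one_smul, xiMul_mapRange, specialise_u,
        specialise_Y] at h'
      rw [dpMul_single_single, dpMul_single_single, h', mul_comm]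

theorem dpMul_assoc (f g h : ℕ →₀ A) :
    dpMul q y (dpMul q y f g) h = dpMul q y f (dpMul q y g h) := by
  induction f using Finsupp.induction_linear with
  | zero => simp only [dpMul_zero_left]
  | add f f' hf hf' => simp only [dpMul_add_left, hf, hf']
  | single n a =>
    induction g using Finsupp.induction_linear with
    | zero => simp only [dpMul_zero_left, dpMul_zero_right]
    | add g g' hg hg' => simp only [dpMul_add_left, dpMul_add_right, hg, hg']
    | single m b =>
      induction h using Finsupp.induction_linear with
      | zero => simp only [dpMul_zero_right]
      | add h h' hh hh' => simp only [dpMul_add_right, hh, hh']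
      | single l c =>
        have h : dpMul (C X : ℤ[X][X]) X
              (dpMul (C X) X (Finsupp.single n 1) (Finsupp.single m 1)) (Finsupp.single l 1) =
            dpMul (C X : ℤ[X][X]) X (Finsupp.single n 1)
              (dpMul (C X) X (Finsupp.single m 1) (Finsupp.single l 1)) := by
          apply dpMul_universal_injective
          simp only [linearCombination_dpMul C_X_ne_one qInt_C_X_ne_zero]
          exact mul_assoc _ _ _
        have h' := congrArg
          (Finsupp.mapRange.addMonoidHom (specialise q y).toAddMonoidHom) h
        have hs : ∀ j : ℕ, Finsupp.mapRange.addMonoidHom (specialise q y).toAddMonoidHom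
            (Finsupp.single j 1) = Finsupp.single j 1 := by
          intro j; simp
        simp only [dpMul_mapRange, specialise_u, specialise_Y, hs] at h'
        have e : ∀ (j : ℕ) (r : A), Finsupp.single j r = r • Finsupp.single j (1 : A) := by
          intro j r; simp
        rw [e n a, e m b, e l c]
        simp only [dpMul_smul_left, dpMul_smul_right, h']

/-- All terms of `ξ^{[n]}·ξ^{[m]}` have index at least `m`. -/
theorem xiMul_mem_span (N n m : ℕ) (hm : N < m) :
    xiMul q y n m ∈ Submodule.span A {h : ℕ →₀ A | ∃ k > N, h = Finsupp.single k 1} := by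
  refine Submodule.sum_mem _ fun i hi => ?_
  rw [Finset.mem_range] at hi
  rw [← mul_one ((-1 : A) ^ i * _ * _ * _ * _), ← smul_eq_mul, ← Finsupp.smul_single]
  exact Submodule.smul_mem _ _ (Submodule.subset_span ⟨m + n - i, by omega, rfl⟩)

end Laws

/-- the `A`-bilinear multiplication determined on basis elements by
`ξ^{[n]}·ξ^{[m]} = Σ_{i=0}^{min(m,n)} (−1)^i q^{i(i−1)/2} C(m+n−i,m)_q C(m,i)_q y^i ξ^{[m+n−i]}`
is bilinear, associative and commutative with unit `ξ^{[0]}`, making the free module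
`ℕ →₀ A` a commutative unital `A`-algebra; moreover for every `n` the `A`-submodule
spanned by `{ξ^{[k]} : k > n}` is an ideal. -/
theorem twisted_divided_power_algebra_structure {A : Type*} [CommRing A] (q y : A) :
    -- on basis elements the multiplication is the prescribed one
    (∀ n m : ℕ, dpMul q y (Finsupp.single n (1 : A)) (Finsupp.single m 1) = xiMul q y n m) ∧
    -- bilinearity
    (∀ f g h : ℕ →₀ A, dpMul q y (f + g) h = dpMul q y f h + dpMul q y g h) ∧
    (∀ f g h : ℕ →₀ A, dpMul q y f (g + h) = dpMul q y f g + dpMul q y f h) ∧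
    (∀ (a : A) (f g : ℕ →₀ A), dpMul q y (a • f) g = a • dpMul q y f g) ∧
    (∀ (a : A) (f g : ℕ →₀ A), dpMul q y f (a • g) = a • dpMul q y f g) ∧
    -- associativity
    (∀ f g h : ℕ →₀ A, dpMul q y (dpMul q y f g) h = dpMul q y f (dpMul q y g h)) ∧
    -- commutativity
    (∀ f g : ℕ →₀ A, dpMul q y f g = dpMul q y g f) ∧
    -- `ξ^{[0]}` is a unit element
    (∀ f : ℕ →₀ A, dpMul q y (Finsupp.single 0 1) f = f) ∧
    (∀ f : ℕ →₀ A, dpMul q y f (Finsupp.single 0 1) = f) ∧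
    -- for every `n`, the span of `{ξ^{[k]} : k > n}` is an ideal
    (∀ n : ℕ, ∀ f g : ℕ →₀ A,
      g ∈ Submodule.span A {h : ℕ →₀ A | ∃ k > n, h = Finsupp.single k 1} →
      dpMul q y f g ∈ Submodule.span A {h : ℕ →₀ A | ∃ k > n, h = Finsupp.single k 1}) := by
  refine ⟨fun n m => by simp [dpMul_single_single], dpMul_add_left q y, dpMul_add_right q y,
    dpMul_smul_left q y, dpMul_smul_right q y, dpMul_assoc q y, dpMul_comm q y, ?_, ?_, ?_⟩
  · intro f
    induction f using Finsupp.induction_linear with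
    | zero => exact dpMul_zero_right q y _
    | add f g hf hg => rw [dpMul_add_right, hf, hg]
    | single n a => simp [dpMul_single_single, xiMul_zero_left]
  · intro f
    induction f using Finsupp.induction_linear with
    | zero => exact dpMul_zero_left q y _
    | add f g hf hg => rw [dpMul_add_left, hf, hg]
    | single n a => simp [dpMul_single_single, xiMul_zero_right]
  · intro N f g hg
    induction hg using Submodule.span_induction with
    | zero => rw [dpMul_zero_right]; exact Submodule.zero_mem _
    | add g g' _ _ hg hg' => rw [dpMul_add_right]; exact Submodule.add_mem _ hg hg'
    | smul a g _ hg => rw [dpMul_smul_right]; exact Submodule.smul_mem _ _ hg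
    | mem g hg =>
      obtain ⟨k, hk, rfl⟩ := hg
      induction f using Finsupp.induction_linear with
      | zero => rw [dpMul_zero_left]; exact Submodule.zero_mem _
      | add f f' hf hf' => rw [dpMul_add_left]; exact Submodule.add_mem _ hf hf'
      | single n a =>
        rw [dpMul_single_single]
        exact Submodule.smul_mem _ _ (xiMul_mem_span q y N n k hk)
end

section
/- Let p be a prime. (a) For every n ≥ 1 there exist unique polynomials Ã_{n,i}(u) ∈ ℤ[u], for n ≤ i ≤ pn, such that in ℤ[u][x, z] one has ∏_{j=0}^{n−1} (z^p − u^{pj}·x^p) = Σ_{i=n}^{pn} Ã_{n,i}(u) · x^{pn−i} · ∏_{j=0}^{i−1} (z − u^j·x). (b) For all n ≥ 1 and n ≤ i ≤ pn, the polynomial (n)_{u^p}! · ((p)_u)^n divides (i)_u! · Ã_{n,i}(u) in ℤ[u]; consequently there is a unique B_{n,i}(u) ∈ ℤ[u] with (n)_{u^p}! · ((p)_u)^n · B_{n,i}(u) = (i)_u! · Ã_{n,i}(u). (Integrality of the coefficients of the divided Frobenius.) -/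
/-- The `q`-factorial `(n)_q! = ∏_{i=1}^n (i)_q`. -/
def qFact {S : Type*} [CommRing S] (q : S) (n : ℕ) : S :=
  ∏ i ∈ Finset.range n, qInt q (i + 1)

/- We work in `ℤ[u][x,z] = MvPolynomial (Fin 3) ℤ`, with `u` the variable `0`, `x` the
variable `1` and `z` the variable `2`; `ℤ[u]` is mapped in via `u ↦` variable `0`. -/

/-- The property that the family `Ã i`, `n ≤ i ≤ pn`, solves
`∏_{j=0}^{n−1} (z^p − u^{pj}·x^p) = Σ_{i=n}^{pn} Ã_i(u)·x^{pn−i}·∏_{j=0}^{i−1} (z − u^j·x)`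
(with `Ã i = 0` outside `[n, pn]`). -/
def IsAtilde (p n : ℕ) (At : ℕ → Polynomial ℤ) : Prop :=
  (∀ i : ℕ, i ∉ Finset.Icc n (p * n) → At i = 0) ∧
  (∏ j ∈ Finset.range n,
      ((MvPolynomial.X 2 : MvPolynomial (Fin 3) ℤ) ^ p -
        (MvPolynomial.X 0) ^ (p * j) * (MvPolynomial.X 1) ^ p)) =
    ∑ i ∈ Finset.Icc n (p * n),
      Polynomial.aeval (MvPolynomial.X 0 : MvPolynomial (Fin 3) ℤ) (At i) *
        (MvPolynomial.X 1) ^ (p * n - i) *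
        ∏ j ∈ Finset.range i,
          ((MvPolynomial.X 2 : MvPolynomial (Fin 3) ℤ) -
            (MvPolynomial.X 0) ^ j * MvPolynomial.X 1)

open Polynomial

/-- The `u`-derivative on `ℤ[u][z]`: the `ℤ[u]`-linear map `z^k ↦ (k)_u z^{k-1}`. -/
noncomputable def qDeriv : ℤ[X][X] →ₗ[ℤ[X]] ℤ[X][X] :=
  Polynomial.lsum fun k => (Polynomial.monomial (k - 1)).comp
    (LinearMap.lsmul ℤ[X] ℤ[X] (qInt (X : ℤ[X]) k))

/-- The product `∏_{j<m} (z - u^j)` in `ℤ[u][z]`. -/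
noncomputable def qBasis (m : ℕ) : ℤ[X][X] :=
  ∏ j ∈ Finset.range m, (X - C ((X : ℤ[X]) ^ j))

/-- The product `∏_{j<n} (z^p - u^{pj})` in `ℤ[u][z]`. -/
noncomputable def frobProd (p n : ℕ) : ℤ[X][X] :=
  ∏ j ∈ Finset.range n, (X ^ p - C ((X : ℤ[X]) ^ (p * j)))

/-! ### q-integers and the common denominator -/

lemma qInt_mul_sub_one {S : Type*} [CommRing S] (q : S) (n : ℕ) :
    qInt q n * (q - 1) = q ^ n - 1 := geom_sum_mul q n

lemma X_sub_one_ne : (X - 1 : ℤ[X]) ≠ 0 := by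
  simpa using Polynomial.X_sub_C_ne_zero (1 : ℤ)

lemma qInt_X_ne {n : ℕ} (hn : 1 ≤ n) : qInt (X : ℤ[X]) n ≠ 0 := by
  intro h
  have := congrArg (Polynomial.eval 1) h
  simp [qInt, Polynomial.eval_finsetSum] at this
  omega

lemma qInt_X_mul (p m : ℕ) :
    qInt (X : ℤ[X]) (p * m) = qInt ((X : ℤ[X]) ^ p) m * qInt (X : ℤ[X]) p := by
  apply mul_right_cancel₀ X_sub_one_ne
  rw [qInt_mul_sub_one, mul_assoc, qInt_mul_sub_one, qInt_mul_sub_one, pow_mul]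

lemma qFact_succ {S : Type*} [CommRing S] (q : S) (n : ℕ) :
    qFact q (n + 1) = qFact q n * qInt q (n + 1) := Finset.prod_range_succ _ _

lemma qFact_X_ne (n : ℕ) : qFact (X : ℤ[X]) n ≠ 0 :=
  Finset.prod_ne_zero_iff.2 fun _ _ => qInt_X_ne (by omega)

/-- The common denominator `(n)_{u^p}! (p)_u^n` acquires the factor `(p(n+1))_u` from `n` to
`n + 1`. -/
lemma denom_succ (p n : ℕ) :
    qFact ((X : ℤ[X]) ^ p) (n + 1) * qInt (X : ℤ[X]) p ^ (n + 1) =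
      qInt (X : ℤ[X]) (p * (n + 1)) * (qFact ((X : ℤ[X]) ^ p) n * qInt (X : ℤ[X]) p ^ n) := by
  rw [qFact_succ, qInt_X_mul]; ring

lemma denom_ne {p : ℕ} (hp : 1 ≤ p) (n : ℕ) :
    qFact ((X : ℤ[X]) ^ p) n * qInt (X : ℤ[X]) p ^ n ≠ 0 := by
  induction n with
  | zero => simp [qFact]
  | succ n ih =>
    rw [denom_succ]
    exact mul_ne_zero (qInt_X_ne (Nat.mul_pos hp n.succ_pos)) ih

/-! ### The `u`-derivative -/

lemma qDeriv_monomial (k : ℕ) (a : ℤ[X]) :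
    qDeriv (Polynomial.monomial k a) = Polynomial.monomial (k - 1) (qInt (X : ℤ[X]) k * a) := by
  simp [qDeriv, Polynomial.lsum_apply, Polynomial.sum_monomial_index]

/-- The defining property `(u - 1) z ∂ f = f(uz) - f(z)`. -/
lemma qDeriv_spec (f : ℤ[X][X]) :
    C (X - 1 : ℤ[X]) * X * qDeriv f = f.comp (C (X : ℤ[X]) * X) - f := by
  induction f using Polynomial.induction_on' with
  | add f g hf hg => rw [map_add, mul_add, hf, hg, Polynomial.add_comp]; ring
  | monomial k a =>
    rw [qDeriv_monomial, Polynomial.monomial_comp]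
    rcases k with _ | k
    · simp [qInt]
    · have h := congrArg (C : ℤ[X] → ℤ[X][X]) (qInt_mul_sub_one (X : ℤ[X]) (k + 1))
      simp only [map_mul, map_sub, map_pow, map_one] at h
      simp only [← Polynomial.C_mul_X_pow_eq_monomial, map_mul, map_sub, map_one, mul_pow,
        Nat.add_sub_cancel]
      linear_combination (C a * X ^ (k + 1)) * h

lemma qDeriv_eq {f g : ℤ[X][X]}
    (h : C (X - 1 : ℤ[X]) * X * g = f.comp (C (X : ℤ[X]) * X) - f) : qDeriv f = g := by
  have hne : C (X - 1 : ℤ[X]) * X ≠ 0 :=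
    mul_ne_zero (Polynomial.C_ne_zero.2 X_sub_one_ne) Polynomial.X_ne_zero
  exact mul_left_cancel₀ hne ((qDeriv_spec f).trans h.symm)

lemma qDeriv_X_mul (f : ℤ[X][X]) :
    qDeriv (X * f) = f + C (X : ℤ[X]) * (X * qDeriv f) := by
  apply qDeriv_eq
  have h := qDeriv_spec f
  rw [Polynomial.mul_comp, Polynomial.X_comp]
  simp only [map_sub, map_one] at h ⊢
  linear_combination (C (X : ℤ[X]) * X) * h

/-- Substituting `c w` for `w` in `∏_{j ≤ m} (w - c^j)` trades the factor `w - c^m` for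
`c^m (c w - 1)`. -/
lemma prod_shift {S : Type*} [CommRing S] (c w : S) (m : ℕ) :
    ∏ j ∈ Finset.range (m + 1), (c * w - c ^ j) =
      (c * w - 1) * c ^ m * ∏ j ∈ Finset.range m, (w - c ^ j) := by
  rw [Finset.prod_range_succ']
  have : ∀ j, c * w - c ^ (j + 1) = c * (w - c ^ j) := fun j => by ring
  simp only [this, Finset.prod_mul_distrib, Finset.prod_const, Finset.card_range, pow_zero]
  ring

lemma qDeriv_frobProd {p : ℕ} (hp : 1 ≤ p) (n : ℕ) :
    qDeriv (frobProd p (n + 1)) =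
      C (qInt (X : ℤ[X]) (p * (n + 1))) * (X ^ (p - 1) * frobProd p n) := by
  apply qDeriv_eq
  have h1 : (frobProd p (n + 1)).comp (C (X : ℤ[X]) * X) =
      ∏ j ∈ Finset.range (n + 1),
        ((C (X : ℤ[X]) ^ p) * X ^ p - (C (X : ℤ[X]) ^ p) ^ j) := by
    simp [frobProd, Polynomial.prod_comp, mul_pow, pow_mul]
  have h2 : ∀ m, frobProd p m =
      ∏ j ∈ Finset.range m, (X ^ p - (C (X : ℤ[X]) ^ p) ^ j) := by
    simp [frobProd, pow_mul]
  rw [h1, prod_shift, ← h2]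
  have h3 : frobProd p (n + 1) = frobProd p n * (X ^ p - (C (X : ℤ[X]) ^ p) ^ n) := by
    rw [h2, h2, Finset.prod_range_succ]
  rw [h3]
  have h := congrArg (C : ℤ[X] → ℤ[X][X]) (qInt_mul_sub_one (X : ℤ[X]) (p * (n + 1)))
  have h4 : (X : ℤ[X][X]) ^ p = X * X ^ (p - 1) := by
    rw [← pow_succ', Nat.sub_add_cancel hp]
  simp only [map_mul, map_sub, map_pow, map_one, pow_mul] at h ⊢
  rw [h4]
  linear_combination (X * X ^ (p - 1) * frobProd p n) * h

lemma qBasis_eq (m : ℕ) : qBasis m = frobProd 1 m := by simp [qBasis, frobProd]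

lemma qDeriv_qBasis (m : ℕ) :
    qDeriv (qBasis (m + 1)) = C (qInt (X : ℤ[X]) (m + 1)) * qBasis m := by
  rw [qBasis_eq, qBasis_eq, qDeriv_frobProd le_rfl]; simp

lemma qDeriv_qBasis_zero : qDeriv (qBasis 0) = 0 := by
  apply qDeriv_eq; simp [qBasis]

lemma eval_one_frobProd_succ (p n : ℕ) : (frobProd p (n + 1)).eval 1 = 0 := by
  simp [frobProd, Finset.prod_range_succ']

/-! ### Taylor values at `1` -/

/-- The Taylor value `(∂^m f)(1)`. -/
noncomputable def taylorVal (m : ℕ) (f : ℤ[X][X]) : ℤ[X] := ((qDeriv ^ m) f).eval 1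

lemma taylorVal_zero (f : ℤ[X][X]) : taylorVal 0 f = f.eval 1 := rfl

lemma taylorVal_succ (m : ℕ) (f : ℤ[X][X]) :
    taylorVal (m + 1) f = taylorVal m (qDeriv f) := by
  simp [taylorVal, pow_succ]

lemma taylorVal_add (m : ℕ) (f g : ℤ[X][X]) :
    taylorVal m (f + g) = taylorVal m f + taylorVal m g := by
  simp [taylorVal]

lemma taylorVal_C_mul (m : ℕ) (a : ℤ[X]) (f : ℤ[X][X]) :
    taylorVal m (C a * f) = a * taylorVal m f := by
  simp [taylorVal, ← Polynomial.smul_eq_C_mul]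

lemma taylorVal_sum (m : ℕ) (s : Finset ℕ) (f : ℕ → ℤ[X][X]) :
    taylorVal m (∑ i ∈ s, f i) = ∑ i ∈ s, taylorVal m (f i) := by
  simp [taylorVal, Polynomial.eval_finsetSum]

lemma taylorVal_qBasis (m i : ℕ) :
    taylorVal m (qBasis i) = if m = i then qFact (X : ℤ[X]) m else 0 := by
  induction m generalizing i with
  | zero =>
    rcases i with _ | i
    · simp [taylorVal_zero, qBasis, qFact]
    · simp [taylorVal_zero, qBasis_eq, eval_one_frobProd_succ]
  | succ m ih =>
    rcases i with _ | i
    · rw [taylorVal_succ, qDeriv_qBasis_zero]; simp [taylorVal]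
    · rw [taylorVal_succ, qDeriv_qBasis, taylorVal_C_mul, ih]
      by_cases h : m = i
      · subst h; simp [qFact_succ, mul_comm]
      · simp [h]

/-- The `u`-Taylor formula: `(∂^m f)(1) = (m)_u! a_m` for `f = ∑ a_i b_i`. -/
lemma taylorVal_expansion (m : ℕ) (s : Finset ℕ) (a : ℕ → ℤ[X]) :
    taylorVal m (∑ i ∈ s, C (a i) * qBasis i) =
      if m ∈ s then qFact (X : ℤ[X]) m * a m else 0 := by
  simp only [taylorVal_sum, taylorVal_C_mul, taylorVal_qBasis, mul_ite, mul_zero,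
    Finset.sum_ite_eq]
  rw [mul_comm]

/-! ### Divisibility of Taylor values -/

/-- All Taylor values of `f` are divisible by `d`, and those of order `< n` vanish. -/
def TaylorDvd (d : ℤ[X]) (n : ℕ) (f : ℤ[X][X]) : Prop :=
  ∀ m, d ∣ taylorVal m f ∧ (m < n → taylorVal m f = 0)

lemma TaylorDvd.X_mul {d : ℤ[X]} {n : ℕ} {f : ℤ[X][X]} (h : TaylorDvd d n f) :
    TaylorDvd d n (X * f) := by
  intro m
  induction m generalizing f n with
  | zero => simpa [taylorVal_zero] using h 0
  | succ m ih =>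
    have h' : TaylorDvd d (n - 1) (qDeriv f) := fun k => by
      rw [← taylorVal_succ]
      exact ⟨(h (k + 1)).1, fun hk => (h (k + 1)).2 (by omega)⟩
    rw [taylorVal_succ, qDeriv_X_mul, taylorVal_add, taylorVal_C_mul]
    refine ⟨dvd_add (h m).1 ((ih h').1.mul_left _), fun hm => ?_⟩
    rw [(h m).2 (by omega), (ih h').2 (by omega), mul_zero, add_zero]

lemma TaylorDvd.X_pow_mul {d : ℤ[X]} {n : ℕ} {f : ℤ[X][X]} (h : TaylorDvd d n f) (k : ℕ) :
    TaylorDvd d n (X ^ k * f) := by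
  induction k with
  | zero => simpa using h
  | succ k ih => rw [pow_succ', mul_assoc]; exact ih.X_mul

/-- The integrality statement, before reading Taylor values as coefficients. -/
lemma taylorDvd_frobProd {p : ℕ} (hp : 1 ≤ p) (n : ℕ) :
    TaylorDvd (qFact ((X : ℤ[X]) ^ p) n * qInt (X : ℤ[X]) p ^ n) n (frobProd p n) := by
  induction n with
  | zero => intro m; simp [qFact]
  | succ n ih =>
    intro m
    rcases m with _ | m
    · simp [taylorVal_zero, eval_one_frobProd_succ]
    · have h := ih.X_pow_mul (p - 1) m
      rw [taylorVal_succ, qDeriv_frobProd hp, taylorVal_C_mul, denom_succ]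
      exact ⟨mul_dvd_mul_left _ h.1, fun hm => by rw [h.2 (by omega), mul_zero]⟩

/-! ### Existence of the expansion -/

lemma qBasis_monic (m : ℕ) : (qBasis m).Monic :=
  Polynomial.monic_prod_of_monic _ _ fun _ _ => Polynomial.monic_X_sub_C _

lemma qBasis_natDegree (m : ℕ) : (qBasis m).natDegree = m := by
  rw [qBasis, Polynomial.natDegree_prod_of_monic _ _ fun _ _ => Polynomial.monic_X_sub_C _]
  simp only [Polynomial.natDegree_X_sub_C]
  simp

lemma exists_expansion (N : ℕ) (f : ℤ[X][X]) (hf : f.degree < N) :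
    ∃ a : ℕ → ℤ[X], f = ∑ i ∈ Finset.range N, C (a i) * qBasis i := by
  induction N generalizing f with
  | zero =>
    refine ⟨0, ?_⟩
    simpa using hf
  | succ N ih =>
    obtain ⟨a, ha⟩ := ih (f - C (f.coeff N) * qBasis N) (by
      rw [Polynomial.degree_lt_iff_coeff_zero] at hf ⊢
      intro m hm
      rw [Polynomial.coeff_sub, Polynomial.coeff_C_mul]
      rcases hm.eq_or_lt with rfl | hm
      · have := (qBasis_monic N).coeff_natDegree
        rw [qBasis_natDegree] at this
        rw [this]; ring
      · rw [hf m hm, Polynomial.coeff_eq_zero_of_natDegree_lt (p := qBasis N)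
          (by rwa [qBasis_natDegree])]
        ring)
    refine ⟨Function.update a N (f.coeff N), ?_⟩
    rw [Finset.sum_range_succ, Function.update_self, ← sub_eq_iff_eq_add, ha]
    refine Finset.sum_congr rfl fun i hi => ?_
    rw [Function.update_of_ne (Finset.mem_range.1 hi).ne]

lemma frobProd_degree {p : ℕ} (hp : 1 ≤ p) (n : ℕ) :
    (frobProd p n).degree < (p * n + 1 : ℕ) := by
  refine lt_of_le_of_lt (Polynomial.degree_prod_le _ _) ?_
  refine lt_of_le_of_lt (Finset.sum_le_card_nsmul _ _ (p : WithBot ℕ) fun j _ => ?_) ?_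
  · exact (Polynomial.degree_X_pow_sub_C hp _).le
  · rw [Finset.card_range, nsmul_eq_mul]
    norm_cast
    rw [mul_comm]; omega

lemma exists_frob_expansion {p : ℕ} (hp : 1 ≤ p) (n : ℕ) :
    ∃ a : ℕ → ℤ[X], (∀ i ∉ Finset.Icc n (p * n), a i = 0) ∧
      frobProd p n = ∑ i ∈ Finset.Icc n (p * n), C (a i) * qBasis i := by
  obtain ⟨a, ha⟩ := exists_expansion _ _ (frobProd_degree hp n)
  refine ⟨fun i => if i ∈ Finset.Icc n (p * n) then a i else 0, fun i hi => if_neg hi, ?_⟩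
  rw [ha]
  symm
  have hsub : Finset.Icc n (p * n) ⊆ Finset.range (p * n + 1) := fun i hi => by
    simp only [Finset.mem_Icc, Finset.mem_range] at hi ⊢; omega
  rw [← Finset.sum_subset hsub]
  · exact Finset.sum_congr rfl fun i hi => by simp only [if_pos hi]
  · intro i hi hi'
    have hin : i < n := by
      simp only [Finset.mem_Icc, Finset.mem_range] at hi hi'; omega
    have h := (taylorDvd_frobProd hp n i).2 hin
    rw [ha, taylorVal_expansion, if_pos hi] at h
    rw [(mul_eq_zero.1 h).resolve_left (qFact_X_ne i)]
    simp

/-! ### Passing between `ℤ[u][z]` and `ℤ[u][x,z]` -/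

/-- Setting `x = 1`. -/
lemma IsAtilde.dehomogenize {p n : ℕ} {At : ℕ → ℤ[X]} (h : IsAtilde p n At) :
    frobProd p n = ∑ i ∈ Finset.Icc n (p * n), C (At i) * qBasis i := by
  have h2 := congrArg (MvPolynomial.aeval (![C X, 1, X] : Fin 3 → ℤ[X][X])) h.2
  have hC : ∀ a : ℤ[X], Polynomial.aeval (C X : ℤ[X][X]) a = C a := fun a => by
    have h := Polynomial.aeval_algebraMap_apply ℤ[X][X] (X : ℤ[X]) a
    rwa [Polynomial.aeval_X_left_apply] at h
  have hA : ∀ a : ℤ[X], MvPolynomial.aeval (![C X, 1, X] : Fin 3 → ℤ[X][X])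
      (Polynomial.aeval (MvPolynomial.X 0 : MvPolynomial (Fin 3) ℤ) a) = C a := fun a => by
    rw [← Polynomial.aeval_algHom_apply, MvPolynomial.aeval_X]
    exact hC a
  simpa [map_prod, map_sum, hA, frobProd, qBasis] using h2

/-- Homogenization, by the substitution `z ↦ z / x` in a field. -/
lemma homogenize_field {K : Type*} [Field K] {p n : ℕ} {a : ℕ → ℤ[X]}
    (h : frobProd p n = ∑ i ∈ Finset.Icc n (p * n), C (a i) * qBasis i)
    (u x z : K) (hx : x ≠ 0) :
    ∏ j ∈ Finset.range n, (z ^ p - u ^ (p * j) * x ^ p) =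
      ∑ i ∈ Finset.Icc n (p * n), Polynomial.aeval u (a i) * x ^ (p * n - i) *
        ∏ j ∈ Finset.range i, (z - u ^ j * x) := by
  have h2 := congrArg (fun f => x ^ (p * n) *
    Polynomial.eval₂ (Polynomial.aeval u : ℤ[X] →ₐ[ℤ] K).toRingHom (z / x) f) h
  simp only [frobProd, qBasis, Polynomial.eval₂_finsetProd, Polynomial.eval₂_finsetSum,
    Polynomial.eval₂_mul, Polynomial.eval₂_sub, Polynomial.eval₂_C, Polynomial.eval₂_X,
    Polynomial.eval₂_pow, AlgHom.toRingHom_eq_coe, RingHom.coe_coe, map_pow,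
    Polynomial.aeval_X, Finset.mul_sum] at h2
  have key : ∀ (k m : ℕ) (c : ℕ → K), x ^ (k * m) * ∏ j ∈ Finset.range m, ((z / x) ^ k - c j) =
      ∏ j ∈ Finset.range m, (z ^ k - c j * x ^ k) := fun k m c => by
    rw [pow_mul, ← Finset.card_range m, ← Finset.prod_const, Finset.card_range,
      ← Finset.prod_mul_distrib]
    refine Finset.prod_congr rfl fun j _ => ?_
    rw [div_pow]; field_simp
  rw [key] at h2
  rw [h2]
  refine Finset.sum_congr rfl fun i hi => ?_
  have hi' := (Finset.mem_Icc.1 hi).2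
  have k1 := key 1 i (fun j => u ^ j)
  simp only [one_mul, pow_one] at k1
  rw [← k1]
  have : x ^ (p * n) = x ^ (p * n - i) * x ^ i := by rw [← pow_add, Nat.sub_add_cancel hi']
  rw [this]; ring

lemma homogenize {p n : ℕ} {a : ℕ → ℤ[X]} (h0 : ∀ i ∉ Finset.Icc n (p * n), a i = 0)
    (h : frobProd p n = ∑ i ∈ Finset.Icc n (p * n), C (a i) * qBasis i) :
    IsAtilde p n a := by
  refine ⟨h0, ?_⟩
  have hinj := IsFractionRing.injective (MvPolynomial (Fin 3) ℤ)
    (FractionRing (MvPolynomial (Fin 3) ℤ))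
  apply hinj
  have := homogenize_field h
    (algebraMap (MvPolynomial (Fin 3) ℤ) (FractionRing (MvPolynomial (Fin 3) ℤ))
      (MvPolynomial.X 0))
    (algebraMap (MvPolynomial (Fin 3) ℤ) _ (MvPolynomial.X 1))
    (algebraMap (MvPolynomial (Fin 3) ℤ) _ (MvPolynomial.X 2))
    (by rw [Ne, map_eq_zero_iff _ hinj]; exact MvPolynomial.X_ne_zero 1)
  simpa [map_prod, map_sum, Polynomial.aeval_algebraMap_apply] using this

/-- integrality of the coefficients of the divided Frobenius: let `p` be a
prime. (a) For every `n ≥ 1` there exist unique polynomials `Ã_{n,i}(u) ∈ ℤ[u]`,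
`n ≤ i ≤ pn`, with `∏_{j=0}^{n−1} (z^p − u^{pj}·x^p)
 = Σ_{i=n}^{pn} Ã_{n,i}(u)·x^{pn−i}·∏_{j=0}^{i−1} (z − u^j·x)` in `ℤ[u][x,z]`.
(b) For all `n ≥ 1` and `n ≤ i ≤ pn`, `(n)_{u^p}!·((p)_u)^n` divides `(i)_u!·Ã_{n,i}(u)`
in `ℤ[u]`, i.e. there is a unique `B_{n,i}(u) ∈ ℤ[u]` with
`(n)_{u^p}!·((p)_u)^n·B_{n,i}(u) = (i)_u!·Ã_{n,i}(u)`. -/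
theorem divided_frobenius_coefficients (p : ℕ) (hp : p.Prime) :
    ∀ n : ℕ, 1 ≤ n →
      (∃! At : ℕ → Polynomial ℤ, IsAtilde p n At) ∧
      (∀ At : ℕ → Polynomial ℤ, IsAtilde p n At → ∀ i ∈ Finset.Icc n (p * n),
        ∃! B : Polynomial ℤ,
          qFact ((Polynomial.X : Polynomial ℤ) ^ p) n *
              (qInt (Polynomial.X : Polynomial ℤ) p) ^ n * B =
            qFact (Polynomial.X : Polynomial ℤ) i * At i) := by
  intro n hn
  have hp1 : 1 ≤ p := hp.one_lt.le
  have taylor : ∀ At : ℕ → ℤ[X], IsAtilde p n At → ∀ i ∈ Finset.Icc n (p * n),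
      taylorVal i (frobProd p n) = qFact (X : ℤ[X]) i * At i := fun At h i hi => by
    rw [h.dehomogenize, taylorVal_expansion, if_pos hi]
  refine ⟨?_, fun At h i hi => ?_⟩
  · obtain ⟨a, h0, ha⟩ := exists_frob_expansion hp1 n
    have haA := homogenize h0 ha
    refine ⟨a, haA, fun b hb => funext fun i => ?_⟩
    by_cases hi : i ∈ Finset.Icc n (p * n)
    · exact mul_left_cancel₀ (qFact_X_ne i)
        ((taylor b hb i hi).symm.trans (taylor a haA i hi))
    · rw [hb.1 i hi, h0 i hi]
  · obtain ⟨B, hB⟩ := (taylorDvd_frobProd hp1 n i).1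
    rw [taylor At h i hi] at hB
    exact ⟨B, hB.symm, fun B' hB' => mul_left_cancel₀ (denom_ne hp1 n) (hB'.trans hB)⟩
end

section
/- Let p be a prime, R a nontrivial commutative ring and q ∈ R with (p)_q = 0 and R q-divisible. Let A = R[x], σ(x) = qx, ∂_σ(x^n) = (n)_q x^{n−1}. Let H be a module over the subring R[x^p] of R[x] and u : H → H an R[x^p]-linear endomorphism such that for every h ∈ H there is n with u^n(h) = 0. Set M = R[x] ⊗_{R[x^p]} H. Then there exists a unique σ-derivation ∂_M on M such that ∂_M(1⊗h) = x^{p−1}⊗u(h) for all h ∈ H, and this ∂_M is quasi-nilpotent. -/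
/-!
The only possible formula is `d (a ⊗ h) = D a ⊗ h + σ a * x^(p-1) ⊗ u h`, by the twisted Leibniz rule
applied to `a ⊗ h = a • (1 ⊗ h)`; this gives uniqueness. For existence one has to see that the formula
is balanced over `B = R[x^p]`, i.e. that `σ` and `D` are `B`-linear. From `(p)_q = 0` it follows that
`q^p = 1`, so `σ` fixes `B` (`sigma_eq_self_of_mem_adjoin`), and `D (x^p) = 0`, so `D` kills `B` by its
own Leibniz rule (`qDeriv_mul`, `qDeriv_eq_zero_of_mem_adjoin`).

Quasi-nilpotence is a double induction: on the exponent `N` with `u^N h = 0`, and, for fixed `h`, on the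
degree of a monomial `a`. In `d (a ⊗ h)` the first summand has smaller degree in `x`, and the second has
`u h` in place of `h`, so both are eventually killed by `d`.
-/

open scoped TensorProduct

open Polynomial in
/-- The twisted Leibniz rule for the `q`-derivation on `R[x]` itself. -/
lemma qDeriv_mul {R : Type*} [CommRing R] {q : R} {σ : R[X] →ₐ[R] R[X]}
    (hσ : σ X = C q * X) {D : R[X] →ₗ[R] R[X]}
    (hD : ∀ n : ℕ, D (X ^ n) = qInt q n • X ^ (n - 1)) (a b : R[X]) :
    D (a * b) = D a * b + σ a * D b := by
  have key : ∀ n m : ℕ, D (X ^ n * X ^ m) = D (X ^ n) * X ^ m + σ (X ^ n) * D (X ^ m) := by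
    intro n m
    -- `(n+m)_q = (n)_q + q^n (m)_q`
    have hadd : qInt q (n + m) = qInt q n + q ^ n * qInt q m := by
      simp [qInt, Finset.sum_range_add, Finset.mul_sum, pow_add]
    have h0 : qInt q 0 = 0 := by simp [qInt]
    rw [← pow_add, hD, hD, hD, map_pow, hσ, hadd]
    simp only [smul_eq_C_mul, map_add, map_mul, map_pow, mul_pow]
    -- the exponents `n - 1` and `m - 1` truncate at `0`, where the coefficient vanishes
    rcases n with _ | n
    · simp [h0]
    rcases m with _ | m
    · simp [h0]
    rw [show n + 1 + (m + 1) - 1 = n + m + 1 by omega, Nat.add_sub_cancel, Nat.add_sub_cancel]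
    ring
  induction a using Polynomial.induction_on' with
  | add a a' ha ha' => rw [add_mul, map_add, ha, ha', map_add, map_add]; ring
  | monomial n r =>
    induction b using Polynomial.induction_on' with
    | add b b' hb hb' => rw [mul_add, map_add, hb, hb', map_add]; ring
    | monomial m s =>
      rw [← smul_X_eq_monomial, ← smul_X_eq_monomial]
      simp only [smul_mul_assoc, mul_smul_comm, map_smul, key, smul_add]

open Polynomial in
lemma sigma_eq_self_of_mem_adjoin {R : Type*} [CommRing R] {p : ℕ} {q : R} (hpq : qInt q p = 0)
    {σ : R[X] →ₐ[R] R[X]} (hσ : σ X = C q * X) {b : R[X]}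
    (hb : b ∈ Algebra.adjoin R {(X : R[X]) ^ p}) : σ b = b := by
  have hq : q ^ p = 1 := by
    have h := geom_sum_mul q p
    rw [show ∑ i ∈ Finset.range p, q ^ i = 0 from hpq, zero_mul] at h
    exact (sub_eq_zero.mp h.symm)
  have hle : Algebra.adjoin R {(X : R[X]) ^ p} ≤ AlgHom.equalizer σ (AlgHom.id R R[X]) := by
    rw [Algebra.adjoin_le_iff, Set.singleton_subset_iff]
    change σ (X ^ p) = X ^ p
    rw [map_pow, hσ, mul_pow, ← map_pow, hq, map_one, one_mul]
  exact hle hb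

open Polynomial in
lemma qDeriv_eq_zero_of_mem_adjoin {R : Type*} [CommRing R] {p : ℕ} {q : R}
    (hpq : qInt q p = 0) {σ : R[X] →ₐ[R] R[X]} (hσ : σ X = C q * X) {D : R[X] →ₗ[R] R[X]}
    (hD : ∀ n : ℕ, D (X ^ n) = qInt q n • X ^ (n - 1)) {b : R[X]}
    (hb : b ∈ Algebra.adjoin R {(X : R[X]) ^ p}) : D b = 0 := by
  induction hb using Algebra.adjoin_induction with
  | mem x hx => rw [Set.mem_singleton_iff.mp hx, hD, hpq, zero_smul]
  | algebraMap r =>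
    have h1 : D 1 = 0 := by simpa [qInt] using hD 0
    rw [Algebra.algebraMap_eq_smul_one, map_smul, h1, smul_zero]
  | add x y _ _ hx hy => rw [map_add, hx, hy, add_zero]
  | mul x y _ _ hx hy => rw [qDeriv_mul hσ hD, hx, hy, zero_mul, mul_zero, add_zero]

/-- The elements of an additive group on which an endomorphism `d` is nilpotent. -/
def eventualKernel {M : Type*} [AddCommGroup M] (d : M →+ M) : AddSubmonoid M where
  carrier := {m | ∃ n : ℕ, (⇑d)^[n] m = 0}
  zero_mem' := ⟨0, rfl⟩
  add_mem' := by
    rintro a b ⟨n, hn⟩ ⟨k, hk⟩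
    refine ⟨n + k, ?_⟩
    rw [iterate_map_add, add_comm n k, Function.iterate_add_apply, hn, add_comm k n,
      Function.iterate_add_apply, hk, iterate_map_zero, iterate_map_zero, add_zero]

lemma mem_eventualKernel_of_apply {M : Type*} [AddCommGroup M] {d : M →+ M} {m : M}
    (h : d m ∈ eventualKernel d) : m ∈ eventualKernel d := by
  obtain ⟨n, hn⟩ := h
  exact ⟨n + 1, hn⟩

/-- let `p` be a prime, `R` a nontrivial commutative ring, `q ∈ R` with
`(p)_q = 0` and `R` `q`-divisible; `A = R[x]`, `σ(x) = qx`, `∂_σ(x^n) = (n)_q x^{n−1}`.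
Let `H` be a module over the subring `R[x^p]` of `R[x]` and `u : H → H` an
`R[x^p]`-linear endomorphism such that every `h` is killed by some power of `u`, and set
`M = R[x] ⊗_{R[x^p]} H`.  Then there is a unique `σ`-derivation `∂_M` on `M` (an additive
map satisfying the twisted Leibniz rule) with `∂_M(1⊗h) = x^{p−1}⊗u(h)` for all `h`, and
any such `∂_M` is quasi-nilpotent. -/
theorem unique_sigma_derivation_on_base_change
    (p : ℕ) (hp : p.Prime)
    (R : Type*) [CommRing R] [Nontrivial R] (q : R)
    (hpq : qInt q p = 0)
    (hdiv : ∀ m : ℕ, 1 ≤ m → qInt q m ≠ 0 → IsUnit (qInt q m))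
    (σ : Polynomial R →ₐ[R] Polynomial R)
    (hσ : σ Polynomial.X = Polynomial.C q * Polynomial.X)
    (D : Polynomial R →ₗ[R] Polynomial R)
    (hD : ∀ n : ℕ, D (Polynomial.X ^ n) = qInt q n • Polynomial.X ^ (n - 1))
    (H : Type*) [AddCommGroup H]
    [Module (Algebra.adjoin R {(Polynomial.X : Polynomial R) ^ p}) H]
    (u : H →ₗ[Algebra.adjoin R {(Polynomial.X : Polynomial R) ^ p}] H)
    (hu : ∀ h : H, ∃ n : ℕ, (⇑u)^[n] h = 0) :
    (∃! d : (Polynomial R ⊗[Algebra.adjoin R {(Polynomial.X : Polynomial R) ^ p}] H) →+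
        (Polynomial R ⊗[Algebra.adjoin R {(Polynomial.X : Polynomial R) ^ p}] H),
      (∀ (a : Polynomial R)
          (m : Polynomial R ⊗[Algebra.adjoin R {(Polynomial.X : Polynomial R) ^ p}] H),
        d (a • m) = D a • m + σ a • d m) ∧
      (∀ h : H, d ((1 : Polynomial R) ⊗ₜ h) = (Polynomial.X ^ (p - 1)) ⊗ₜ u h)) ∧
    (∀ d : (Polynomial R ⊗[Algebra.adjoin R {(Polynomial.X : Polynomial R) ^ p}] H) →+
        (Polynomial R ⊗[Algebra.adjoin R {(Polynomial.X : Polynomial R) ^ p}] H),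
      (∀ a m, d (a • m) = D a • m + σ a • d m) →
      (∀ h : H, d ((1 : Polynomial R) ⊗ₜ h) = (Polynomial.X ^ (p - 1)) ⊗ₜ u h) →
      ∀ m, ∃ n : ℕ, (⇑d)^[n] m = 0) := by
  have hσB : ∀ b : Algebra.adjoin R {(Polynomial.X : Polynomial R) ^ p}, σ b = b :=
    fun b => sigma_eq_self_of_mem_adjoin hpq hσ b.2
  have hDB : ∀ b : Algebra.adjoin R {(Polynomial.X : Polynomial R) ^ p}, D b = 0 :=
    fun b => qDeriv_eq_zero_of_mem_adjoin hpq hσ hD b.2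
  -- the Leibniz rule and the values on `1 ⊗ h` force the values on all pure tensors
  have formula : ∀ d : (Polynomial R ⊗[Algebra.adjoin R {(Polynomial.X : Polynomial R) ^ p}] H) →+
        (Polynomial R ⊗[Algebra.adjoin R {(Polynomial.X : Polynomial R) ^ p}] H),
      (∀ a m, d (a • m) = D a • m + σ a • d m) →
      (∀ h : H, d ((1 : Polynomial R) ⊗ₜ h) = (Polynomial.X ^ (p - 1)) ⊗ₜ u h) →
      ∀ (a : Polynomial R) (h : H),
        d (a ⊗ₜ h) = D a ⊗ₜ h + (σ a * Polynomial.X ^ (p - 1)) ⊗ₜ u h := by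
    intro d h1 h2 a h
    have := h1 a (1 ⊗ₜ h)
    rwa [h2, TensorProduct.smul_tmul', TensorProduct.smul_tmul', TensorProduct.smul_tmul',
      smul_eq_mul, smul_eq_mul, smul_eq_mul, mul_one, mul_one] at this
  refine ⟨?_, ?_⟩
  · let DB : Polynomial R →ₗ[Algebra.adjoin R {(Polynomial.X : Polynomial R) ^ p}] Polynomial R :=
      { toFun := D
        map_add' := map_add D
        map_smul' := fun b a => by
          rw [Algebra.smul_def, Algebra.smul_def]
          change D ((b : Polynomial R) * a) = (b : Polynomial R) * D a
          rw [qDeriv_mul hσ hD, hDB, hσB, zero_mul, zero_add] }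
    let T : Polynomial R →ₗ[Algebra.adjoin R {(Polynomial.X : Polynomial R) ^ p}] Polynomial R :=
      { toFun := fun a => σ a * Polynomial.X ^ (p - 1)
        map_add' := fun a b => by rw [map_add, add_mul]
        map_smul' := fun b a => by
          rw [Algebra.smul_def, Algebra.smul_def]
          change σ ((b : Polynomial R) * a) * _ = (b : Polynomial R) * (σ a * _)
          rw [map_mul, hσB, mul_assoc] }
    let d := TensorProduct.map DB LinearMap.id + TensorProduct.map T u
    have hd : ∀ (a : Polynomial R) (h : H),
        d (a ⊗ₜ h) = D a ⊗ₜ h + (σ a * Polynomial.X ^ (p - 1)) ⊗ₜ u h := fun a h => rfl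
    refine ⟨d.toAddMonoidHom, ⟨?_, ?_⟩, ?_⟩
    · intro a m
      change d (a • m) = D a • m + σ a • d m
      induction m using TensorProduct.induction_on with
      | zero => simp only [smul_zero, map_zero, add_zero]
      | add x y hx hy => rw [smul_add, map_add, hx, hy, map_add, smul_add, smul_add]; abel
      | tmul b h =>
        rw [TensorProduct.smul_tmul', smul_eq_mul, hd, hd, qDeriv_mul hσ hD, map_mul, smul_add,
          TensorProduct.smul_tmul', TensorProduct.smul_tmul', TensorProduct.smul_tmul',
          TensorProduct.add_tmul, smul_eq_mul, smul_eq_mul, smul_eq_mul, mul_assoc, add_assoc]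
    · intro h
      have h1 : D 1 = 0 := by simpa [qInt] using hD 0
      change d (1 ⊗ₜ h) = _
      rw [hd, h1, TensorProduct.zero_tmul, zero_add, map_one, one_mul]
    · rintro d' ⟨h1, h2⟩
      ext m
      change d' m = d m
      induction m using TensorProduct.induction_on with
      | zero => rw [map_zero, map_zero]
      | add x y hx hy => rw [map_add, map_add, hx, hy]
      | tmul a h => rw [hd, formula d' h1 h2]
  · intro d h1 h2 m
    have hd := formula d h1 h2
    have main : ∀ (N : ℕ) (h : H), (⇑u)^[N] h = 0 →
        ∀ a : Polynomial R, a ⊗ₜ h ∈ eventualKernel d := by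
      intro N
      induction N with
      | zero =>
        intro h hh a
        rw [show h = 0 from hh, TensorProduct.tmul_zero]
        exact zero_mem _
      | succ N ih =>
        intro h hh a
        have hT := ih (u h) hh
        have mono : ∀ (n : ℕ) (r : R),
            (r • (Polynomial.X : Polynomial R) ^ n) ⊗ₜ h ∈ eventualKernel d := by
          intro n
          induction n with
          | zero =>
            intro r
            refine mem_eventualKernel_of_apply ?_
            rw [hd, map_smul, hD, show qInt q 0 = 0 by simp [qInt], zero_smul, smul_zero,
              TensorProduct.zero_tmul, zero_add]
            exact hT _
          | succ n ihn =>
            intro r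
            refine mem_eventualKernel_of_apply ?_
            rw [hd, map_smul, hD, smul_smul, Nat.add_sub_cancel]
            exact add_mem (ihn _) (hT _)
        induction a using Polynomial.induction_on' with
        | add a b ha hb => rw [TensorProduct.add_tmul]; exact add_mem ha hb
        | monomial n r => rw [← Polynomial.smul_X_eq_monomial]; exact mono n r
    change m ∈ eventualKernel d
    induction m using TensorProduct.induction_on with
    | zero => exact zero_mem _
    | add x y hx hy => exact add_mem hx hy
    | tmul a h =>
      obtain ⟨N, hN⟩ := hu h
      exact main N h hN a
end

section
/- Let p be a prime, R a nontrivial commutative ring and q ∈ R with (p)_q = 0 and R q-divisible. Let A = R[x], σ(x) = qx, ∂_σ(x^n) = (n)_q x^{n−1}. Let H be a module over the subring R[x^p] of R[x], u : H → H an R[x^p]-linear endomorphism with u^n(h) = 0 for each h and some n = n(h), let M = R[x] ⊗_{R[x^p]} H and let ∂_M be the unique σ-derivation on M with ∂_M(1⊗h) = x^{p−1}⊗u(h). Then the map h ↦ 1⊗h induces an isomorphism of R[x^p]-modules from ker(u) onto ker(∂_M), and the map h ↦ (class of x^{p−1}⊗h) induces an isomorphism of R[x^p]-modules from coker(u) onto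 coker(∂_M). (Comparison of the cohomology of the q-de Rham complex of (M, ∂_M) with that of the Higgs complex of (H, u).) -/
/-!
The powers `1, x, …, x^{p-1}` form a basis of `R[x]` over `R[x^p]`, so every element of `M` is
uniquely `∑_{i<p} x^i ⊗ h_i` (`exists_sum` for existence, the coordinate maps `coordM` for
uniqueness). In these coordinates `∂_M` is a cyclic shift:

* `∂_M (1 ⊗ h) = x^{p-1} ⊗ u h`;
* `∂_M (x^{i+1} ⊗ h) = x^i ⊗ φ_i h` with `φ_i = (i+1)_q + q^{i+1} x^p u` (`dM_tmul`).

For `0 < j < p` the element `(j)_q` is nonzero: otherwise `(j)_q = (p)_q = 0` would force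
`(gcd j p)_q = (1)_q = 1` to vanish (`qInt_gcd`). By `q`-divisibility `(j)_q` is a unit, so each
`φ_i` with `i + 1 < p` is a unit plus a multiple of the locally nilpotent `u`, hence bijective
(`bijective_unit_add`). Thus the kernel and cokernel of `∂_M` are those of the one remaining
entry `u : 1 ⊗ H → x^{p-1} ⊗ H`.
-/

open scoped TensorProduct

namespace QHiggs
open Polynomial

lemma qInt_add {S : Type*} [CommRing S] (q : S) (m n : ℕ) :
    qInt q (m + n) = qInt q m + q ^ m * qInt q n := by
  simp only [qInt, Finset.sum_range_add, Finset.mul_sum, pow_add]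

/-- From `(n)_q = 1 + q (n-1)_q = 0` one reads off an inverse of `q`. -/
lemma isUnit_of_qInt_eq_zero {S : Type*} [CommRing S] {q : S} {n : ℕ} (hn : 1 ≤ n)
    (h : qInt q n = 0) : IsUnit q := by
  obtain ⟨k, rfl⟩ := Nat.exists_eq_add_of_le hn
  rw [qInt_add] at h
  simp only [qInt, Finset.range_one, Finset.sum_singleton, pow_zero, pow_one] at h
  exact IsUnit.of_mul_eq_one (-(∑ i ∈ Finset.range k, q ^ i)) (by linear_combination -h)

/-- Euclid's algorithm on indices, based on `(m + n)_q = (m)_q + q^m (n)_q`. -/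
lemma qInt_gcd {S : Type*} [CommRing S] {q : S} (hq : IsUnit q) (m n : ℕ)
    (hm : qInt q m = 0) (hn : qInt q n = 0) : qInt q (m.gcd n) = 0 := by
  have key : ∀ a b : ℕ, qInt q a = 0 → qInt q (a + b) = 0 → qInt q b = 0 := by
    intro a b ha hab
    rw [qInt_add, ha, zero_add] at hab
    exact (hq.pow a).mul_right_eq_zero.mp hab
  have hmul : ∀ a k : ℕ, qInt q a = 0 → qInt q (a * k) = 0 := by
    intro a k ha
    induction k with
    | zero => simp [qInt]
    | succ k ih => rw [Nat.mul_succ, qInt_add, ih, ha]; simp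
  induction m, n using Nat.gcd.induction with
  | H0 n => simpa using hn
  | H1 m n h0 ih =>
    rw [Nat.gcd_rec]
    refine ih (key (m * (n / m)) (n % m) (hmul _ _ hm) ?_) hm
    rw [Nat.div_add_mod]; exact hn

lemma qInt_ne_zero {S : Type*} [CommRing S] [Nontrivial S] {q : S} {p : ℕ} (hp : p.Prime)
    (hpq : qInt q p = 0) {j : ℕ} (hj : 0 < j) (hjp : j < p) : qInt q j ≠ 0 := by
  intro h
  have := qInt_gcd (isUnit_of_qInt_eq_zero hp.one_lt.le hpq) p j hpq h
  rw [(Nat.coprime_of_lt_prime hj.ne' hjp hp)] at this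
  simp [qInt] at this

/-- A unit scalar plus a scalar multiple of a locally nilpotent endomorphism is bijective. -/
lemma bijective_unit_add {S H : Type*} [CommRing S] [AddCommGroup H] [Module S H]
    (u : H →ₗ[S] H) (hu : ∀ h : H, ∃ n : ℕ, (⇑u)^[n] h = 0) {a : S} (ha : IsUnit a) (c : S) :
    Function.Bijective (fun h : H => a • h + c • u h) := by
  obtain ⟨a, rfl⟩ := ha
  constructor
  · have key : ∀ n : ℕ, ∀ h : H, (⇑u)^[n] h = 0 → (a : S) • h + c • u h = 0 → h = 0 := by
      intro n
      induction n with
      | zero => intro h hn _; simpa using hn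
      | succ n ih =>
        intro h hn h0
        have h1 : u h = 0 := by
          refine ih (u h) (by simpa using hn) ?_
          simpa using congrArg u h0
        rw [h1, smul_zero, add_zero] at h0
        exact (smul_eq_zero_iff_eq a).mp h0
    intro g h hgh
    obtain ⟨n, hn⟩ := hu (g - h)
    refine sub_eq_zero.mp (key n _ hn ?_)
    have : (a : S) • g + c • u g = (a : S) • h + c • u h := hgh
    rw [map_sub, smul_sub, smul_sub, sub_add_sub_comm, this, sub_self]
  · have key : ∀ n : ℕ, ∀ h : H, (⇑u)^[n] h = 0 → ∃ g, (a : S) • g + c • u g = h := by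
      intro n
      induction n with
      | zero => intro h hn; exact ⟨0, by simpa using hn.symm⟩
      | succ n ih =>
        intro h hn
        obtain ⟨g, hg⟩ := ih (u h) (by simpa using hn)
        refine ⟨(↑a⁻¹ : S) • (h - c • g), ?_⟩
        rw [smul_smul, Units.mul_inv, one_smul, map_smul, map_sub, ← hg]
        have : u h - u (c • g) = (a : S) • g := by
          rw [map_smul, ← hg]; abel
        rw [map_smul] at this
        rw [hg, map_smul, this, smul_smul (↑a⁻¹ : S), Units.inv_mul, one_smul]
        abel
    intro h
    obtain ⟨n, hn⟩ := hu h
    exact key n h hn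

/-- The subring `R[x^p]` of `R[x]`. -/
noncomputable abbrev PowSub (R : Type*) [CommRing R] (p : ℕ) : Subalgebra R R[X] :=
  Algebra.adjoin R {(X : R[X]) ^ p}

/-- The element `x^p` of `R[x^p]`. -/
noncomputable def xp (R : Type*) [CommRing R] (p : ℕ) : PowSub R p :=
  ⟨X ^ p, Algebra.subset_adjoin rfl⟩

/-- The polynomial in `x^p` whose coefficient in degree `n * p` is the coefficient of `f` in
degree `n * p + i`; for `i < p` it is the `x^i`-component of `f` over `R[x^p]`. -/
noncomputable def comp {R : Type*} [CommRing R] (p i : ℕ) (f : R[X]) : R[X] :=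
  expand R p (contract p (divX^[i] f))

section
variable {R : Type*} [CommRing R]

lemma coeff_divX_iterate (i : ℕ) (f : R[X]) (n : ℕ) :
    (divX^[i] f).coeff n = f.coeff (n + i) := by
  induction i generalizing f with
  | zero => simp
  | succ i ih => rw [Function.iterate_succ_apply, ih, coeff_divX]; congr 1

lemma coeff_comp {p : ℕ} (hp : 0 < p) (i : ℕ) (f : R[X]) (n : ℕ) :
    (comp p i f).coeff n = if p ∣ n then f.coeff (n + i) else 0 := by
  rw [comp, coeff_expand hp]
  split_ifs with h
  · rw [coeff_contract hp.ne', coeff_divX_iterate, Nat.div_mul_cancel h]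
  · rfl

lemma comp_mem {p : ℕ} (i : ℕ) (f : R[X]) : comp p i f ∈ PowSub R p := by
  have hX : (X : R[X]) ^ p ∈ PowSub R p := (xp R p).2
  rw [comp, expand_eq_sum, Polynomial.sum]
  refine sum_mem fun n _ => mul_mem ?_ (pow_mem hX n)
  exact Subalgebra.algebraMap_mem (PowSub R p) _

lemma comp_mul {p : ℕ} (hp : 0 < p) {i : ℕ} (hi : i < p) {s : R[X]} (hs : s ∈ PowSub R p)
    (f : R[X]) : comp p i (s * f) = s * comp p i f := by
  induction hs using Algebra.adjoin_induction generalizing f with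
  | mem s hs =>
    obtain rfl : s = X ^ p := hs
    ext n
    simp only [coeff_comp hp, coeff_X_pow_mul']
    by_cases hpn : p ∣ n
    · obtain ⟨m, rfl⟩ := hpn
      rcases m with _ | m
      · simp [hi, hp.ne']
      · have h1 : p * (m + 1) - p = p * m := by rw [Nat.mul_succ]; omega
        have h2 : p * (m + 1) + i - p = p * m + i := by rw [Nat.mul_succ]; omega
        have h3 : p ≤ p * (m + 1) := Nat.le_mul_of_pos_right _ (by omega)
        simp [h1, h2, h3, h3.trans (Nat.le_add_right _ i)]
    · rw [if_neg hpn]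
      split_ifs with h1 h2
      · exact absurd ((Nat.dvd_sub_iff_left h1 dvd_rfl).mp h2) hpn
      · rfl
      · rfl
  | algebraMap r =>
    ext n; simp [coeff_comp hp]
  | add s t _ _ hs ht =>
    rw [add_mul, add_mul, ← hs, ← ht]
    ext n; simp only [coeff_comp hp, coeff_add]; split_ifs <;> simp
  | mul s t _ _ hs ht => rw [mul_assoc, hs, ht, mul_assoc]

/-- The `R[x^p]`-linear coordinate function of `x^i` for the basis `1, x, …, x^{p-1}`
of `R[x]` over `R[x^p]`. -/
noncomputable def coord {p : ℕ} (hp : 0 < p) {i : ℕ} (hi : i < p) :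
    R[X] →ₗ[PowSub R p] PowSub R p where
  toFun f := ⟨comp p i f, comp_mem i f⟩
  map_add' f g := by
    ext n; simp only [coeff_comp hp, coeff_add, Subalgebra.coe_add]; split_ifs <;> simp
  map_smul' s f := Subtype.ext (comp_mul hp hi s.2 f)

lemma coord_X_pow {p : ℕ} (hp : 0 < p) {i j : ℕ} (hi : i < p) (hj : j < p) :
    coord (R := R) hp hi (X ^ j) = if i = j then 1 else 0 := by
  ext n
  change (comp p i (X ^ j)).coeff n = _
  rw [coeff_comp hp, coeff_X_pow]
  by_cases hpn : p ∣ n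
  · obtain ⟨m, rfl⟩ := hpn
    rcases m with _ | m
    · split_ifs <;> simp_all
    · have h3 : p ≤ p * (m + 1) := Nat.le_mul_of_pos_right _ (by omega)
      have h4 : p * (m + 1) + i ≠ j := by omega
      split_ifs <;> simp_all [coeff_one]
  · have : n ≠ 0 := by rintro rfl; simp at hpn
    split_ifs <;> simp_all [coeff_one]

variable {H : Type*} {p : ℕ} [AddCommGroup H] [Module (PowSub R p) H]

/-- The coordinate of `x^i` in `R[x] ⊗ H = ⨁_{i < p} x^i ⊗ H`. -/
noncomputable def coordM (hp : 0 < p) {i : ℕ} (hi : i < p) :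
    R[X] ⊗[PowSub R p] H →ₗ[PowSub R p] H :=
  (TensorProduct.lid _ H).toLinearMap ∘ₗ (coord hp hi).rTensor H

lemma coordM_tmul (hp : 0 < p) {i j : ℕ} (hi : i < p) (hj : j < p) (h : H) :
    coordM hp hi ((X ^ j : R[X]) ⊗ₜ[PowSub R p] h) = if i = j then h else 0 := by
  have key : coordM hp hi ((X ^ j : R[X]) ⊗ₜ[PowSub R p] h) = coord (R := R) hp hi (X ^ j) • h :=
    rfl
  rw [key, coord_X_pow hp hi hj]
  split_ifs
  · exact one_smul _ h
  · exact zero_smul _ h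

lemma coordM_sum (hp : 0 < p) {i k : ℕ} (hi : i < p) (hk : k ≤ p) (h : ℕ → H) :
    coordM hp hi (∑ j ∈ Finset.range k, (X ^ j : R[X]) ⊗ₜ[PowSub R p] h j)
      = if i < k then h i else 0 := by
  rw [map_sum, Finset.sum_congr rfl (fun j hj => coordM_tmul hp hi
    ((Finset.mem_range.mp hj).trans_le hk) (h j))]
  simp

lemma smul_tmul_coe (s : PowSub R p) (f : R[X]) (h : H) :
    ((s : R[X]) * f) ⊗ₜ[PowSub R p] h = f ⊗ₜ (s • h) := by
  rw [← TensorProduct.smul_tmul]; rfl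

/-- The elements `x^j ⊗ h`, `j < p`, generate `R[x] ⊗ H` additively: write
`x^n = (x^p)^(n / p) * x^(n % p)` and move the power of `x^p` across the tensor sign. -/
lemma exists_sum (hp : 0 < p) (m : R[X] ⊗[PowSub R p] H) :
    ∃ h : ℕ → H, m = ∑ j ∈ Finset.range p, (X ^ j : R[X]) ⊗ₜ[PowSub R p] h j := by
  have hadd : ∀ m n : R[X] ⊗[PowSub R p] H,
      (∃ h : ℕ → H, m = ∑ j ∈ Finset.range p, (X ^ j : R[X]) ⊗ₜ[PowSub R p] h j) →
      (∃ h : ℕ → H, n = ∑ j ∈ Finset.range p, (X ^ j : R[X]) ⊗ₜ[PowSub R p] h j) →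
      ∃ h : ℕ → H, m + n = ∑ j ∈ Finset.range p, (X ^ j : R[X]) ⊗ₜ[PowSub R p] h j := by
    rintro _ _ ⟨g, rfl⟩ ⟨h, rfl⟩
    exact ⟨g + h, by simp [TensorProduct.tmul_add, Finset.sum_add_distrib]⟩
  induction m with
  | zero => exact ⟨0, by simp⟩
  | add m n hm hn => exact hadd m n hm hn
  | tmul f h =>
    induction f using Polynomial.induction_on' with
    | add f g hf hg => rw [TensorProduct.add_tmul]; exact hadd _ _ hf hg
    | monomial n a =>
      have hn : n % p < p := Nat.mod_lt _ hp
      refine ⟨fun j => if j = n % p then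
        (algebraMap R (PowSub R p) a * xp R p ^ (n / p)) • h else 0, ?_⟩
      rw [Finset.sum_eq_single_of_mem (n % p) (Finset.mem_range.mpr hn)]
      · dsimp only
        rw [if_pos rfl, ← smul_tmul_coe]
        congr 1
        have : (X : R[X]) ^ n = (X ^ p) ^ (n / p) * X ^ (n % p) := by
          rw [← pow_mul, ← pow_add, Nat.div_add_mod]
        rw [← C_mul_X_pow_eq_monomial, this, ← mul_assoc]
        rfl
      · intro j _ hj
        simp [hj]

variable {q : R} {σ : R[X] →ₐ[R] R[X]} {D : R[X] →ₗ[R] R[X]}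
  {u : H →ₗ[PowSub R p] H} {dM : (R[X] ⊗[PowSub R p] H) →+ (R[X] ⊗[PowSub R p] H)}

/-- `∂_M` carries `x^{i+1} ⊗ H` to `x^i ⊗ H`, acting on `H` as `(i+1)_q + q^{i+1} x^p u`;
the second term uses `x^{i+1} x^{p-1} = x^p x^i`. -/
lemma dM_tmul (hp : 0 < p) (hσ : σ X = C q * X)
    (hD : ∀ n : ℕ, D (X ^ n) = qInt q n • X ^ (n - 1))
    (hleib : ∀ (a : R[X]) (m : R[X] ⊗[PowSub R p] H), dM (a • m) = D a • m + σ a • dM m)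
    (hdM : ∀ h : H, dM ((1 : R[X]) ⊗ₜ h) = (X ^ (p - 1)) ⊗ₜ u h) (i : ℕ) (h : H) :
    dM ((X ^ (i + 1) : R[X]) ⊗ₜ h) =
      (X ^ i : R[X]) ⊗ₜ (algebraMap R (PowSub R p) (qInt q (i + 1)) • h +
        (algebraMap R (PowSub R p) (q ^ (i + 1)) * xp R p) • u h) := by
  have h1 : (X ^ (i + 1) : R[X]) ⊗ₜ[PowSub R p] h =
      (X ^ (i + 1) : R[X]) • ((1 : R[X]) ⊗ₜ[PowSub R p] h) := by
    rw [TensorProduct.smul_tmul', smul_eq_mul, mul_one]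
  rw [h1, hleib, hD, hdM, map_pow, hσ, TensorProduct.smul_tmul', TensorProduct.smul_tmul',
    TensorProduct.tmul_add, ← smul_tmul_coe, ← smul_tmul_coe]
  congr 2
  · rw [smul_eq_mul, mul_one, Nat.add_sub_cancel, smul_eq_C_mul]; rfl
  · have h2 : (X : R[X]) ^ (i + 1) * X ^ (p - 1) = X ^ p * X ^ i := by
      rw [← pow_add, ← pow_add]; congr 1; omega
    have h3 : ((algebraMap R (PowSub R p) (q ^ (i + 1)) * xp R p : PowSub R p) : R[X]) =
      C (q ^ (i + 1)) * X ^ p := rfl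
    rw [h3, smul_eq_mul, mul_pow, mul_assoc, h2, mul_assoc, C_pow]

end
end QHiggs

open QHiggs Polynomial in
/-- comparison of the cohomology of the `q`-de Rham complex with that of
the Higgs complex: let `p` be a prime, `R` a nontrivial commutative ring, `q ∈ R` with
`(p)_q = 0` and `R` `q`-divisible; `A = R[x]`, `σ(x) = qx`, `∂_σ(x^n) = (n)_q x^{n−1}`.
Let `H` be an `R[x^p]`-module, `u : H → H` an `R[x^p]`-linear endomorphism with every `h`
killed by a power of `u`, `M = R[x] ⊗_{R[x^p]} H`, and `∂_M` the unique `σ`-derivation on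
`M` with `∂_M(1⊗h) = x^{p−1}⊗u(h)`.  Then `h ↦ 1⊗h` induces an isomorphism of
`R[x^p]`-modules `ker(u) ≅ ker(∂_M)` and `h ↦ (class of x^{p−1}⊗h)` induces an
isomorphism of `R[x^p]`-modules `coker(u) ≅ coker(∂_M)` (all stated elementwise below). -/
theorem q_deRham_Higgs_cohomology_comparison
    (p : ℕ) (hp : p.Prime)
    (R : Type*) [CommRing R] [Nontrivial R] (q : R)
    (hpq : qInt q p = 0)
    (hdiv : ∀ m : ℕ, 1 ≤ m → qInt q m ≠ 0 → IsUnit (qInt q m))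
    (σ : Polynomial R →ₐ[R] Polynomial R)
    (hσ : σ Polynomial.X = Polynomial.C q * Polynomial.X)
    (D : Polynomial R →ₗ[R] Polynomial R)
    (hD : ∀ n : ℕ, D (Polynomial.X ^ n) = qInt q n • Polynomial.X ^ (n - 1))
    (H : Type*) [AddCommGroup H]
    [Module (Algebra.adjoin R {(Polynomial.X : Polynomial R) ^ p}) H]
    (u : H →ₗ[Algebra.adjoin R {(Polynomial.X : Polynomial R) ^ p}] H)
    (hu : ∀ h : H, ∃ n : ℕ, (⇑u)^[n] h = 0)
    (dM : (Polynomial R ⊗[Algebra.adjoin R {(Polynomial.X : Polynomial R) ^ p}] H) →+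
      (Polynomial R ⊗[Algebra.adjoin R {(Polynomial.X : Polynomial R) ^ p}] H))
    (hleib : ∀ (a : Polynomial R)
        (m : Polynomial R ⊗[Algebra.adjoin R {(Polynomial.X : Polynomial R) ^ p}] H),
      dM (a • m) = D a • m + σ a • dM m)
    (hdM : ∀ h : H, dM ((1 : Polynomial R) ⊗ₜ h) = (Polynomial.X ^ (p - 1)) ⊗ₜ u h) :
    -- the map `h ↦ 1⊗h` is `R[x^p]`-linear …
    (∀ (s : Algebra.adjoin R {(Polynomial.X : Polynomial R) ^ p}) (h : H),
      (1 : Polynomial R) ⊗ₜ[Algebra.adjoin R {(Polynomial.X : Polynomial R) ^ p}] (s • h) =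
        (s : Polynomial R) • ((1 : Polynomial R) ⊗ₜ h)) ∧
    -- … maps `ker u` into `ker ∂_M` …
    (∀ h : H, u h = 0 → dM ((1 : Polynomial R) ⊗ₜ h) = 0) ∧
    -- … injectively …
    (∀ h : H, u h = 0 → (1 : Polynomial R) ⊗ₜ[Algebra.adjoin R
      {(Polynomial.X : Polynomial R) ^ p}] h = (0 :
        Polynomial R ⊗[Algebra.adjoin R {(Polynomial.X : Polynomial R) ^ p}] H) → h = 0) ∧
    -- … and surjectively onto `ker ∂_M`
    (∀ m, dM m = 0 → ∃ h : H, u h = 0 ∧ (1 : Polynomial R) ⊗ₜ h = m) ∧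
    -- `h ↦ x^{p−1}⊗h` induces a well-defined injection on cokernels:
    -- `x^{p−1}⊗h ∈ im ∂_M ↔ h ∈ im u`
    (∀ h : H, (∃ m, (Polynomial.X ^ (p - 1) : Polynomial R) ⊗ₜ[Algebra.adjoin R
        {(Polynomial.X : Polynomial R) ^ p}] h = dM m) ↔ (∃ h' : H, h = u h')) ∧
    -- which is surjective on cokernels
    (∀ m, ∃ h : H, ∃ m', m = (Polynomial.X ^ (p - 1) : Polynomial R) ⊗ₜ h + dM m') := by

  have hp0 : 0 < p := hp.pos
  -- the diagonal entries `(i+1)_q + q^{i+1} x^p u` of `∂_M`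
  let φ : ℕ → H → H := fun i h => algebraMap R (PowSub R p) (qInt q (i + 1)) • h +
        (algebraMap R (PowSub R p) (q ^ (i + 1)) * xp R p) • u h
  have hφ : ∀ i, i + 1 < p → Function.Bijective (φ i) := fun i hi =>
    bijective_unit_add u hu ((hdiv (i + 1) (by omega)
      (qInt_ne_zero hp hpq (by omega) hi)).map (algebraMap R (PowSub R p))) _
  have hφ0 : ∀ i, φ i 0 = 0 := by
    intro i
    change _ • (0 : H) + _ • u 0 = 0
    rw [map_zero, smul_zero, smul_zero, add_zero]
  have hsum : ∀ h : ℕ → H,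
      dM (∑ j ∈ Finset.range p, (X ^ j : R[X]) ⊗ₜ[PowSub R p] h j) =
      (∑ i ∈ Finset.range (p - 1), (X ^ i : R[X]) ⊗ₜ[PowSub R p] φ i (h (i + 1))) +
        (X ^ (p - 1) : R[X]) ⊗ₜ[PowSub R p] u (h 0) := by
    intro h
    rw [show Finset.range p = Finset.range (p - 1 + 1) by congr 1; omega,
      Finset.sum_range_succ', map_add, map_sum, pow_zero, hdM]
    congr 1
    exact Finset.sum_congr rfl fun i _ => dM_tmul hp0 hσ hD hleib hdM i (h (i + 1))
  -- coordinates of `∂_M`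
  have hc : ∀ (h : ℕ → H) (i : ℕ) (hi : i < p), coordM hp0 hi
      (dM (∑ j ∈ Finset.range p, (X ^ j : R[X]) ⊗ₜ[PowSub R p] h j)) =
        if i < p - 1 then φ i (h (i + 1)) else u (h 0) := by
    intro h i hi
    rw [hsum, map_add, coordM_sum hp0 hi (by omega) (fun i => φ i (h (i + 1))),
      coordM_tmul hp0 hi (by omega)]
    split_ifs <;> first | omega | simp
  refine ⟨?_, ?_, ?_, ?_, ?_, ?_⟩
  · intro s h
    rw [← smul_tmul_coe, TensorProduct.smul_tmul', smul_eq_mul]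
  · intro h hh
    rw [hdM, hh, TensorProduct.tmul_zero]
  · intro h _ h0
    have := coordM_tmul (R := R) hp0 hp0 hp0 h
    rw [pow_zero, h0, map_zero, if_pos rfl] at this
    exact this.symm
  · intro m hm
    obtain ⟨h, rfl⟩ := exists_sum hp0 m
    refine ⟨h 0, ?_, ?_⟩
    · have := hc h (p - 1) (by omega)
      rw [hm, map_zero, if_neg (lt_irrefl _)] at this
      exact this.symm
    · rw [Finset.sum_eq_single_of_mem 0 (Finset.mem_range.mpr hp0), pow_zero]
      intro j hj hj0
      obtain ⟨i, rfl⟩ := Nat.exists_eq_succ_of_ne_zero hj0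
      have hi : i + 1 < p := Finset.mem_range.mp hj
      have := hc h i (by omega)
      rw [hm, map_zero, if_pos (by omega), ← hφ0 i] at this
      rw [← (hφ i hi).1 this, TensorProduct.tmul_zero]
  · intro h
    constructor
    · rintro ⟨m, hm⟩
      obtain ⟨g, rfl⟩ := exists_sum hp0 m
      have := hc g (p - 1) (by omega)
      rw [← hm, coordM_tmul hp0 _ (by omega), if_pos rfl, if_neg (lt_irrefl _)] at this
      exact ⟨g 0, this⟩
    · rintro ⟨h', rfl⟩
      exact ⟨_, (hdM h').symm⟩
  · intro m
    obtain ⟨h, rfl⟩ := exists_sum hp0 m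
    have hg : ∀ i, ∃ g, i + 1 < p → φ i g = h i := by
      intro i
      by_cases hi : i + 1 < p
      · obtain ⟨g, hg⟩ := (hφ i hi).2 (h i)
        exact ⟨g, fun _ => hg⟩
      · exact ⟨0, fun h => absurd h hi⟩
    choose g hg using hg
    -- solve the `φ`-equations in degrees `0, …, p - 2`, with constant coefficient `0`
    refine ⟨h (p - 1), ∑ j ∈ Finset.range p,
      (X ^ j : R[X]) ⊗ₜ[PowSub R p] (Nat.casesOn j 0 g : H), ?_⟩
    rw [hsum (fun j => Nat.casesOn j 0 g),
      show Finset.range p = Finset.range (p - 1 + 1) by congr 1; omega,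
      Finset.sum_range_succ, add_comm]
    congr 1
    change _ = (∑ i ∈ Finset.range (p - 1), (X ^ i : R[X]) ⊗ₜ[PowSub R p] φ i (g i)) +
      (X ^ (p - 1) : R[X]) ⊗ₜ[PowSub R p] u 0
    rw [map_zero, TensorProduct.tmul_zero, add_zero]
    refine Finset.sum_congr rfl fun i hi => ?_
    have := Finset.mem_range.mp hi
    rw [hg i (by omega)]
end
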